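/- arXiv:2309.10636 — 2 statements merged into one kernel-verified Lean document; each statement's English description precedes it below -/
import Mathlib

section
/- Suppose Λ ⊆ ℕ satisfies d̄_Φ(Λ) > 0 for some multiplicative Følner sequence Φ. Then for all ℓ, ℓ' ∈ ℕ: (1) there exist m, n ∈ ℕ with m > n such that ℓ·(m² − n²) and ℓ'·m·n are distinct and d̄_Φ( (ℓ·(m² − n²))⁻¹Λ ∩ (ℓ'·m·n)⁻¹Λ ) > 0; and (2) there exist m, n ∈ ℕ such that ℓ·(m² + n²) and ℓ'·m·n are distinct and d̄_Φ( (ℓ·(m² + n²))⁻¹Λ ∩ (ℓ'·m·n)⁻¹Λ ) > 0. -/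
open Filter

/-- `Φ` is a multiplicative Følner sequence in `ℕ = {1, 2, …}`: a sequence of finite
nonempty sets of positive integers which is asymptotically invariant under dilation. -/
def IsMulFolner (Φ : ℕ → Finset ℕ) : Prop :=
  (∀ K, (Φ K).Nonempty) ∧ (∀ K, ∀ n ∈ Φ K, 0 < n) ∧
    ∀ x : ℕ, 0 < x →
      Tendsto (fun K => ((Φ K ∩ (Φ K).image (fun n => x * n)).card : ℝ) / ((Φ K).card : ℝ))
        atTop (nhds 1)

-- The upper multiplicative density of `Λ` with respect to the sequence `Φ`.
open scoped Classical in
noncomputable def upMulDens (Φ : ℕ → Finset ℕ) (Λ : Set ℕ) : ℝ :=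
  limsup (fun K => (((Φ K).filter (fun n => n ∈ Λ)).card : ℝ) / ((Φ K).card : ℝ)) atTop

/-!
By compactness, the density is carried by a mean on `ℕ` that is invariant under dilations; its image
on `ℚ` gives a Koopman representation `π` of `ℚˣ`. With `r t = c * (t ^ 2 + e) / t` and `t = m / n`,
the claim becomes `⟪π (r t)⁻¹ ξ, ξ⟫ > 0`, where `ξ` is the indicator of `Λ`. Let `ζ` be the average
of `π (r t)⁻¹ ξ` over a suitable mean `N` on `ℚ`. It is nonzero, since `⟪ζ, 1⟫ = ⟪ξ, 1⟫ > 0`, so it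
is enough that `⟪ζ, ξ⟫ = ‖ζ‖ ^ 2`, and for this that `ζ` is invariant under `π`.

The invariance comes from the addition law of the cotangent, under which
`r ((t * θ - e) / (t + θ)) = r t * (θ ^ 2 + e) / ((θ + t) * (θ - e / t))`. If `θ` is distributed
according to an affine-invariant mean, then `(t * θ - e) / (t + θ)` has the law of `t + θ⁻¹`, so `N`
is taken stationary for the latter walk. The functions `θ ↦ π (θ - u) x` have the same inner
products for all pairs of distinct `u`, which makes their deviations from the average over `u`
orthogonal; a second moment computation then bounds `‖ζ‖` by the norm of the average of the
functions `θ ↦ π (θ - u) ζ`. So these do not depend on `u`, the linear factors in the addition law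
cancel, and `ζ` is fixed by `π`.
-/

open Topology
open scoped InnerProductSpace

section BoundedFun

variable {X Y E : Type*} [SeminormedAddCommGroup E] [NormedSpace ℝ E]

variable (X E) in
/-- The space of bounded functions `X → E`, for an arbitrary set `X`. -/
def boundedFun : Submodule ℝ (X → E) where
  carrier := {f | ∃ C, ∀ x, ‖f x‖ ≤ C}
  add_mem' := fun ⟨C, hC⟩ ⟨D, hD⟩ ↦ ⟨C + D, fun x ↦ norm_add_le_of_le (hC x) (hD x)⟩
  zero_mem' := ⟨0, fun _ ↦ norm_zero.le⟩
  smul_mem' := fun c _ ⟨C, hC⟩ ↦ ⟨‖c‖ * C, fun x ↦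
    (norm_smul_le c _).trans (mul_le_mul_of_nonneg_left (hC x) (norm_nonneg c))⟩

lemma boundedFun_of_norm_le {f : X → E} {C : ℝ} (h : ∀ x, ‖f x‖ ≤ C) : f ∈ boundedFun X E :=
  ⟨C, h⟩

lemma boundedFun_comp {f : Y → E} (hf : f ∈ boundedFun Y E) (T : X → Y) :
    (fun x ↦ f (T x)) ∈ boundedFun X E :=
  let ⟨C, hC⟩ := hf
  ⟨C, fun x ↦ hC (T x)⟩

end BoundedFun

/-- A finitely additive probability on `X`, presented as its integral. The functional is defined on
all functions `X → ℝ`, so that iterated means need no boundedness proofs; only its values on bounded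
functions are meaningful. -/
structure Mean (X : Type*) where
  toLinearMap : (X → ℝ) →ₗ[ℝ] ℝ
  map_one' : toLinearMap (fun _ ↦ 1) = 1
  abs_le' : ∀ (f : X → ℝ) (C : ℝ), (∀ x, |f x| ≤ C) → |toLinearMap f| ≤ C

namespace Mean

variable {X Y ι : Type*}

instance : CoeFun (Mean X) (fun _ ↦ (X → ℝ) → ℝ) := ⟨fun m ↦ m.toLinearMap⟩

section Basic

variable (m : Mean X) {f g : X → ℝ}

lemma map_add (f g : X → ℝ) : m (fun x ↦ f x + g x) = m f + m g :=
  m.toLinearMap.map_add f g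

lemma map_sub (f g : X → ℝ) : m (fun x ↦ f x - g x) = m f - m g :=
  m.toLinearMap.map_sub f g

lemma map_const_mul (c : ℝ) (f : X → ℝ) : m (fun x ↦ c * f x) = c * m f :=
  m.toLinearMap.map_smul c f

lemma map_sum (s : Finset ι) (f : ι → X → ℝ) :
    m (fun x ↦ ∑ i ∈ s, f i x) = ∑ i ∈ s, m (f i) := by
  simpa only [← Finset.sum_apply] using _root_.map_sum m.toLinearMap f s

lemma map_const (c : ℝ) : m (fun _ ↦ c) = c := by
  simpa [m.map_one'] using m.map_const_mul c (fun _ ↦ 1)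

lemma abs_le {C : ℝ} (h : ∀ x, |f x| ≤ C) : |m f| ≤ C :=
  m.abs_le' f C h

lemma le_of_forall_le (hf : f ∈ boundedFun X ℝ) {C : ℝ} (h : ∀ x, f x ≤ C) : m f ≤ C := by
  obtain ⟨D, hD⟩ := hf
  -- Centre the interval `[-D, C]` that contains the values of `f`.
  have key : |m (fun x ↦ f x - (C - D) / 2)| ≤ (C + D) / 2 := m.abs_le fun x ↦ by
    have hlower := (_root_.abs_le.1 (hD x)).1
    exact _root_.abs_le.2 ⟨by linarith, by linarith [h x]⟩
  rw [m.map_sub, m.map_const] at key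
  linarith [(_root_.abs_le.1 key).2]

lemma nonneg (hf : f ∈ boundedFun X ℝ) (h : ∀ x, 0 ≤ f x) : 0 ≤ m f := by
  have key := m.le_of_forall_le (Submodule.smul_mem _ (-1) hf) (C := 0) (by simpa using h)
  rw [LinearMap.map_smul] at key
  simpa using key

lemma comp_mem_boundedFun {f : X → Y → ℝ} {C : ℝ} (h : ∀ x y, |f x y| ≤ C) (m : X → Mean Y) :
    (fun x ↦ m x (f x)) ∈ boundedFun X ℝ :=
  ⟨C, fun x ↦ (m x).abs_le (h x)⟩

end Basic

section Constructions

/-- The composition of a mean on `X` with a family of means on `Y` indexed by `X`. -/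
def bind (μ : Mean X) (l : X → Mean Y) : Mean Y where
  toLinearMap := μ.toLinearMap ∘ₗ LinearMap.pi fun x ↦ (l x).toLinearMap
  map_one' := by
    change μ (fun x ↦ l x fun _ ↦ 1) = 1
    simp only [(l _).map_one', μ.map_one']
  abs_le' _ _ h := μ.abs_le fun x ↦ (l x).abs_le h

lemma bind_apply (μ : Mean X) (l : X → Mean Y) (f : Y → ℝ) : μ.bind l f = μ fun x ↦ l x f :=
  rfl

/-- The point mass at `x`. -/
def dirac (x : X) : Mean X where
  toLinearMap := LinearMap.proj x
  map_one' := rfl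
  abs_le' _ _ h := h x

/-- The image of a mean under a map. -/
def map (T : X → Y) (m : Mean X) : Mean Y :=
  m.bind fun x ↦ dirac (T x)

lemma map_apply (T : X → Y) (m : Mean X) (f : Y → ℝ) : m.map T f = m fun x ↦ f (T x) :=
  rfl

/-- The uniform average of a finite nonempty family of means. -/
noncomputable def average (s : Finset ι) (hs : s.Nonempty) (l : ι → Mean X) : Mean X where
  toLinearMap := (s.card : ℝ)⁻¹ • ∑ i ∈ s, (l i).toLinearMap
  map_one' := by simp [(l _).map_one', hs.card_ne_zero]
  abs_le' f C h := by
    have hcard : (0 : ℝ) < s.card := Nat.cast_pos.2 hs.card_pos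
    simp only [LinearMap.smul_apply, LinearMap.sum_apply, smul_eq_mul]
    rw [abs_mul, abs_of_pos (inv_pos.2 hcard), inv_mul_le_iff₀ hcard]
    calc |∑ i ∈ s, l i f| ≤ ∑ i ∈ s, |l i f| := Finset.abs_sum_le_sum_abs _ _
      _ ≤ ∑ _i ∈ s, C := Finset.sum_le_sum fun i _ ↦ (l i).abs_le h
      _ = s.card * C := by simp

lemma average_apply (s : Finset ι) (hs : s.Nonempty) (l : ι → Mean X) (f : X → ℝ) :
    average s hs l f = (s.card : ℝ)⁻¹ * ∑ i ∈ s, l i f := by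
  simp [average]

lemma exists_of_boundedFun (F : boundedFun X ℝ →ₗ[ℝ] ℝ)
    (hone : F ⟨fun _ ↦ 1, 1, by simp⟩ = 1)
    (habs : ∀ f C, (∀ x, |f.1 x| ≤ C) → |F f| ≤ C) :
    ∃ m : Mean X, ∀ f : boundedFun X ℝ, m f = F f := by
  obtain ⟨G, hG⟩ := LinearMap.exists_extend F
  have hGF (f : boundedFun X ℝ) : G f = F f := LinearMap.congr_fun hG f
  exact ⟨⟨G, (hGF _).trans hone, fun f C h ↦ hGF ⟨f, C, h⟩ ▸ habs ⟨f, C, h⟩ C h⟩, hGF⟩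

lemma exists_tendsto_ultrafilter (u : Ultrafilter ι) (M : ι → Mean X) :
    ∃ m : Mean X, ∀ f ∈ boundedFun X ℝ, Tendsto (fun i ↦ M i f) u (𝓝 (m f)) := by
  have hlim (f : boundedFun X ℝ) : ∃ a, Tendsto (fun i ↦ M i f) u (𝓝 a) := by
    obtain ⟨f, C, hC⟩ := f
    obtain ⟨a, -, ha⟩ := (isCompact_Icc (a := -C) (b := C)).ultrafilter_le_nhds
      (u.map fun i ↦ M i f) (le_principal_iff.2 <| mem_map.2 <|
        univ_mem' fun i ↦ _root_.abs_le.1 ((M i).abs_le hC))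
    exact ⟨a, ha⟩
  choose L hL using hlim
  let F : boundedFun X ℝ →ₗ[ℝ] ℝ :=
    { toFun := L
      map_add' := fun f g ↦ tendsto_nhds_unique (hL (f + g)) <|
        ((hL f).add (hL g)).congr fun i ↦ ((M i).toLinearMap.map_add _ _).symm
      map_smul' := fun c f ↦ tendsto_nhds_unique (hL (c • f)) <|
        ((hL f).const_mul c).congr fun i ↦ ((M i).toLinearMap.map_smul _ _).symm }
  obtain ⟨m, hm⟩ := exists_of_boundedFun F
    (tendsto_nhds_unique (hL _) (by simp only [map_const, tendsto_const_nhds]))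
    fun f C h ↦ le_of_tendsto (hL f).abs (Eventually.of_forall fun i ↦ (M i).abs_le h)
  exact ⟨m, fun f hf ↦ (hm ⟨f, hf⟩).symm ▸ hL ⟨f, hf⟩⟩

/-- The limit of a family of means along an ultrafilter. -/
noncomputable def ultralimit (u : Ultrafilter ι) (M : ι → Mean X) : Mean X :=
  (exists_tendsto_ultrafilter u M).choose

lemma tendsto_ultralimit (u : Ultrafilter ι) (M : ι → Mean X) {f : X → ℝ}
    (hf : f ∈ boundedFun X ℝ) : Tendsto (fun i ↦ M i f) u (𝓝 (ultralimit u M f)) :=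
  (exists_tendsto_ultrafilter u M).choose_spec f hf

/-- A limit point of the Cesàro averages of a sequence of means. -/
noncomputable def cesaro (M : ℕ → Mean X) : Mean X :=
  ultralimit (hyperfilter ℕ) fun n ↦ average (Finset.range (n + 1)) Finset.nonempty_range_add_one M

variable {M : ℕ → Mean X} {f g : X → ℝ}

lemma tendsto_cesaro (M : ℕ → Mean X) (hf : f ∈ boundedFun X ℝ) :
    Tendsto (fun n : ℕ ↦ ((n : ℝ) + 1)⁻¹ * ∑ k ∈ Finset.range (n + 1), M k f)
      (hyperfilter ℕ) (𝓝 (cesaro M f)) := by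
  simpa [average_apply, cesaro] using tendsto_ultralimit (hyperfilter ℕ)
    (fun n ↦ average (Finset.range (n + 1)) Finset.nonempty_range_add_one M) hf

lemma cesaro_congr (hf : f ∈ boundedFun X ℝ) (hg : g ∈ boundedFun X ℝ)
    (h : ∀ k, M k f = M k g) : cesaro M f = cesaro M g :=
  tendsto_nhds_unique (tendsto_cesaro M hf) ((tendsto_cesaro M hg).congr fun n ↦ by simp only [h])

lemma cesaro_eq_of_succ (hf : f ∈ boundedFun X ℝ) (hg : g ∈ boundedFun X ℝ)
    (h : ∀ k, M (k + 1) f = M k g) : cesaro M f = cesaro M g := by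
  obtain ⟨C, hC⟩ := hf
  have htelescope (n : ℕ) : ∑ k ∈ Finset.range (n + 1), M k f -
      ∑ k ∈ Finset.range (n + 1), M k g = M 0 f - M (n + 1) f := by
    simp only [← h, ← Finset.sum_sub_distrib, Finset.sum_range_sub']
  have hbound (n : ℕ) : ‖M 0 f - M (n + 1) f‖ ≤ C + C :=
    norm_sub_le_of_le ((M 0).abs_le hC) ((M (n + 1)).abs_le hC)
  have hzero : Tendsto (fun n : ℕ ↦ ((n : ℝ) + 1)⁻¹ * (M 0 f - M (n + 1) f))
      (hyperfilter ℕ) (𝓝 0) :=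
    (bdd_le_mul_tendsto_zero' (C + C) (Eventually.of_forall hbound)
      tendsto_one_div_add_atTop_nhds_zero_nat).mono_left Nat.hyperfilter_le_atTop
      |>.congr fun n ↦ by rw [one_div, mul_comm]
  refine sub_eq_zero.1 (tendsto_nhds_unique
    ((tendsto_cesaro M ⟨C, hC⟩).sub (tendsto_cesaro M hg)) (hzero.congr fun n ↦ ?_))
  rw [← mul_sub, htelescope]

end Constructions

section Invariance

variable {m : Mean X}

/-- `m` is invariant under the transformation `T`. -/
def IsInvariant (m : Mean X) (T : X → X) : Prop :=
  ∀ f ∈ boundedFun X ℝ, m (fun x ↦ f (T x)) = m f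

lemma exists_isInvariant_finset [Nonempty X] {T : ι → X → X}
    (hT : ∀ i j, Function.Commute (T i) (T j)) (s : Finset ι) :
    ∃ m : Mean X, ∀ i ∈ s, m.IsInvariant (T i) := by
  classical
  induction s using Finset.induction_on with
  | empty => exact ⟨dirac (Classical.arbitrary X), by simp⟩
  | insert i s _ ih =>
    obtain ⟨m, hm⟩ := ih
    refine ⟨cesaro fun k ↦ m.map (T i)^[k], Finset.forall_mem_insert _ _ _ |>.2 ⟨?_, ?_⟩⟩
    · refine fun f hf ↦ (cesaro_eq_of_succ hf (boundedFun_comp hf _) fun k ↦ ?_).symm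
      simp only [map_apply, Function.iterate_succ_apply']
    · refine fun j hj f hf ↦ cesaro_congr (boundedFun_comp hf _) hf fun k ↦ ?_
      simp only [map_apply]
      simpa only [((hT j i).iterate_right k).eq] using hm j hj _ (boundedFun_comp hf (T i)^[k])

theorem exists_isInvariant [Nonempty X] {T : ι → X → X}
    (hT : ∀ i j, Function.Commute (T i) (T j)) : ∃ m : Mean X, ∀ i, m.IsInvariant (T i) := by
  choose M hM using exists_isInvariant_finset hT
  let u : Ultrafilter (Finset ι) := Ultrafilter.of atTop
  refine ⟨ultralimit u M, fun i f hf ↦ ?_⟩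
  have hmem : ∀ᶠ s in (u : Filter (Finset ι)), i ∈ s :=
    Ultrafilter.of_le _ <|
      (eventually_ge_atTop {i}).mono fun s hs ↦ Finset.singleton_subset_iff.1 hs
  exact tendsto_nhds_unique (tendsto_ultralimit u M (boundedFun_comp hf _))
    ((tendsto_ultralimit u M hf).congr' (hmem.mono fun s hs ↦ (hM s i hs f hf).symm))

lemma eq_zero_of_abs_mean_sum_le {T : ℕ → X → X} (hT : ∀ j, m.IsInvariant (T j)) {f : X → ℝ}
    (hf : f ∈ boundedFun X ℝ) {C : ℝ}
    (h : ∀ n : ℕ, |m fun x ↦ ∑ j ∈ Finset.range n, f (T j x)| ≤ C * √n) : m f = 0 := by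
  have hmul (n : ℕ) : n * |m f| ≤ C * √n := by
    have hsum : m (fun x ↦ ∑ j ∈ Finset.range n, f (T j x)) = n * m f := by
      simp [map_sum, hT _ f hf]
    simpa [hsum, abs_mul] using h n
  by_contra hne
  obtain ⟨k, hk⟩ := exists_nat_gt (C / |m f|)
  have hlt : C < (k + 1) * |m f| := by
    rw [div_lt_iff₀ (abs_pos.2 hne)] at hk
    linarith [abs_nonneg (m f)]
  have hle := hmul ((k + 1) ^ 2)
  rw [Nat.cast_pow, Real.sqrt_sq (Nat.cast_nonneg _)] at hle
  push_cast at hle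
  nlinarith [(k.cast_nonneg : (0 : ℝ) ≤ k)]

end Invariance

section AffineInvariance

variable {K : Type*} [Field K]

/-- `m` is invariant under the affine group of the line `K`. -/
def IsAffineInvariant (m : Mean K) : Prop :=
  ∀ A B : K, A ≠ 0 → m.IsInvariant fun x ↦ A * x + B

variable (K) in
theorem exists_isAffineInvariant : ∃ m : Mean K, m.IsAffineInvariant := by
  obtain ⟨l, hl⟩ := exists_isInvariant (T := fun b x : K ↦ x + b) fun b b' x ↦ add_right_comm _ _ _
  obtain ⟨μ, hμ⟩ := exists_isInvariant (T := fun u x : Kˣ ↦ u * x) fun u u' x ↦ mul_left_comm _ _ _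
  refine ⟨μ.bind fun u ↦ l.map fun x ↦ u * x, fun A B hA f hf ↦ ?_⟩
  have htranslate (u : Kˣ) : l (fun x ↦ f (A * (u * x) + B)) = l fun x ↦ f (A * (u * x)) := by
    rw [← hl (B / (A * u)) _ (boundedFun_comp hf fun x ↦ A * (u * x))]
    congr! 3 with x
    field_simp
  simp only [bind_apply, map_apply, htranslate]
  obtain ⟨C, hC⟩ := hf
  have hdilate := hμ (Units.mk0 A hA) (fun u ↦ l fun x ↦ f (u * x))
    (comp_mem_boundedFun (fun (u : Kˣ) x ↦ hC (u * x)) fun _ ↦ l)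
  simpa only [Units.val_mul, Units.val_mk0, mul_assoc] using hdilate

namespace IsAffineInvariant

variable {m : Mean K} (hm : m.IsAffineInvariant)
include hm

variable [CharZero K]

open Classical in
lemma apply_single (p : K) : m (Pi.single p 1) = 0 := by
  have hbound (x : K) : ‖(Pi.single p 1 : K → ℝ) x‖ ≤ 1 := by
    by_cases hx : x = p <;> simp [hx]
  have hshift (j : ℕ) : m.IsInvariant fun x ↦ 1 * x + (j : K) := hm 1 j one_ne_zero
  refine eq_zero_of_abs_mean_sum_le hshift (boundedFun_of_norm_le hbound) (C := 1)
    fun n ↦ m.abs_le fun x ↦ ?_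
  rw [one_mul]
  have hle_one : ((Finset.range n).filter fun j : ℕ ↦ 1 * x + (j : K) = p).card ≤ 1 := by
    refine Finset.card_le_one.2 fun i hi j hj ↦ ?_
    rw [Finset.mem_filter] at hi hj
    exact_mod_cast add_left_cancel (hi.2.trans hj.2.symm)
  rcases n.eq_zero_or_pos with rfl | hn
  · simp
  · simpa [Pi.single_apply] using
      (Nat.cast_le_one.2 hle_one).trans (Real.one_le_sqrt.2 (Nat.one_le_cast.2 hn))

lemma congr {f g : K → ℝ} (h : f =ᶠ[cofinite] g) : m f = m g := by
  classical
  have hfin : {x | ¬ f x = g x}.Finite := eventually_cofinite.1 h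
  have hsum : (fun x ↦ f x - g x) =
      fun x ↦ ∑ p ∈ hfin.toFinset, (f p - g p) * (Pi.single p 1 : K → ℝ) x := by
    ext x
    simp +contextual [Pi.single_apply]
  have hzero : m (fun x ↦ f x - g x) = 0 := by
    simp [hsum, map_sum, map_const_mul, hm.apply_single]
  rwa [map_sub, sub_eq_zero] at hzero

lemma abs_le_of_eventually {f : K → ℝ} {C : ℝ} (h : ∀ᶠ x in cofinite, |f x| ≤ C) : |m f| ≤ C := by
  classical
  obtain ⟨p, hp⟩ := h.exists
  have hcongr : m f = m fun x ↦ if |f x| ≤ C then f x else f p :=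
    hm.congr (h.mono fun x hx ↦ (if_pos hx).symm)
  rw [hcongr]
  refine m.abs_le fun x ↦ ?_
  split_ifs with hx
  exacts [hx, hp]

lemma le_of_eventually_le {f : K → ℝ} (hf : f ∈ boundedFun K ℝ) {C : ℝ}
    (h : ∀ᶠ x in cofinite, f x ≤ C) : m f ≤ C := by
  obtain ⟨D, hD⟩ := hf
  have hcongr : m f = m fun x ↦ min (f x) C := hm.congr (h.mono fun x hx ↦ (min_eq_left hx).symm)
  rw [hcongr]
  exact m.le_of_forall_le ⟨max D |C|, fun x ↦ abs_min_le_max_abs_abs.trans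
    (max_le_max_right _ (hD x))⟩ fun x ↦ min_le_right _ _

lemma eq_zero_of_eventually_abs_sum_le {T : ℕ → K → K} (hT : ∀ j, m.IsInvariant (T j)) {f : K → ℝ}
    (hf : f ∈ boundedFun K ℝ) {C : ℝ}
    (h : ∀ n : ℕ, ∀ᶠ x in cofinite, |∑ j ∈ Finset.range n, f (T j x)| ≤ C * √n) : m f = 0 :=
  eq_zero_of_abs_mean_sum_le hT hf fun n ↦ hm.abs_le_of_eventually (h n)

end IsAffineInvariant

/-- The random walk on `K` with initial law `m` and steps `t ↦ t + θ⁻¹`, where `θ` has law `m`. -/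
noncomputable def inverseWalk (m : Mean K) : ℕ → Mean K
  | 0 => m
  | k + 1 => (inverseWalk m k).bind fun t ↦ m.map fun θ ↦ t + θ⁻¹

lemma inverseWalk_succ (m : Mean K) (k : ℕ) (f : K → ℝ) :
    m.inverseWalk (k + 1) f = m.inverseWalk k fun t ↦ m fun θ ↦ f (t + θ⁻¹) :=
  rfl

lemma inverseStep_mem_boundedFun (m : Mean K) {f : K → ℝ} (hf : f ∈ boundedFun K ℝ) :
    (fun t ↦ m fun θ ↦ f (t + θ⁻¹)) ∈ boundedFun K ℝ :=
  let ⟨_, hC⟩ := hf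
  comp_mem_boundedFun (fun t θ ↦ hC (t + θ⁻¹)) fun _ ↦ m

lemma IsAffineInvariant.inverseWalk {m : Mean K} (hm : m.IsAffineInvariant) (k : ℕ) :
    (m.inverseWalk k).IsAffineInvariant := by
  induction k with
  | zero => exact hm
  | succ k ih =>
    intro A B hA f hf
    have hstep (t : K) : m (fun θ ↦ f (A * (t + θ⁻¹) + B)) = m fun θ ↦ f (A * t + B + θ⁻¹) := by
      rw [← hm A⁻¹ 0 (inv_ne_zero hA) _ (boundedFun_comp hf fun θ ↦ A * t + B + θ⁻¹)]
      congr! 3 with θ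
      dsimp only
      rw [add_zero, mul_inv, inv_inv, mul_add, add_right_comm]
    simp only [inverseWalk_succ, hstep]
    exact ih A B hA _ (m.inverseStep_mem_boundedFun hf)

/-- A pair of affine-invariant means, the second of which is stationary for the Markov operator
`P f t = ∫ f (t + θ⁻¹) dm(θ)` of the inverse walk, and agrees with the first on the bounded
functions fixed by `P`, up to finite sets. -/
structure IsStationaryPair (m N : Mean K) : Prop where
  fst : m.IsAffineInvariant
  snd : N.IsAffineInvariant
  stationary : ∀ f ∈ boundedFun K ℝ, N (fun t ↦ m fun θ ↦ f (t + θ⁻¹)) = N f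
  eq_of_harmonic : ∀ f ∈ boundedFun K ℝ,
    (∀ᶠ t in cofinite, m (fun θ ↦ f (t + θ⁻¹)) = f t) → N f = m f

variable (K) in
theorem exists_isStationaryPair [CharZero K] : ∃ m N : Mean K, IsStationaryPair m N := by
  obtain ⟨m, hm⟩ := exists_isAffineInvariant K
  refine ⟨m, cesaro m.inverseWalk, hm, fun A B hA f hf ↦ ?_, fun f hf ↦ ?_, fun f hf hharm ↦ ?_⟩
  · exact cesaro_congr (boundedFun_comp hf _) hf fun k ↦ hm.inverseWalk k A B hA f hf
  · exact (cesaro_eq_of_succ hf (m.inverseStep_mem_boundedFun hf) fun k ↦ rfl).symm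
  · have hwalk (k : ℕ) : m.inverseWalk k f = m f := by
      induction k with
      | zero => rfl
      | succ k ih => rw [inverseWalk_succ, (hm.inverseWalk k).congr hharm, ih]
    rw [← map_const (cesaro m.inverseWalk) (m f)]
    exact cesaro_congr hf ⟨|m f|, fun _ ↦ le_rfl⟩ fun k ↦ by rw [hwalk, map_const]

end AffineInvariance

end Mean

section L2

variable {X H E : Type*} [NormedAddCommGroup H] [InnerProductSpace ℝ H]
  [NormedAddCommGroup E] [InnerProductSpace ℝ E]

lemma boundedFun_of_forall_norm_eq {v : X → E} {C : ℝ} (h : ∀ x, ‖v x‖ = C) :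
    v ∈ boundedFun X E :=
  ⟨C, fun x ↦ (h x).le⟩

lemma inner_mem_boundedFun {f g : X → E} (hf : f ∈ boundedFun X E) (hg : g ∈ boundedFun X E) :
    (fun x ↦ ⟪f x, g x⟫_ℝ) ∈ boundedFun X ℝ := by
  obtain ⟨C, hC⟩ := hf
  obtain ⟨D, hD⟩ := hg
  exact ⟨C * D, fun x ↦ (norm_inner_le_norm _ _).trans
    (mul_le_mul (hC x) (hD x) (norm_nonneg _) ((norm_nonneg _).trans (hC x)))⟩

namespace Mean

variable (m : Mean X)

variable (E) in
/-- The bounded functions `X → E`, as a pre-Hilbert space for the semi-inner product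
`∫ ⟪f x, g x⟫ dm(x)`; a type synonym of `boundedFun X E`. -/
def PreL2 (_m : Mean X) : Type _ :=
  boundedFun X E

instance : AddCommGroup (PreL2 E m) := inferInstanceAs (AddCommGroup (boundedFun X E))

instance : Module ℝ (PreL2 E m) := inferInstanceAs (Module ℝ (boundedFun X E))

/-- The semi-inner product of `PreL2 E m`. -/
@[reducible]
def preL2Core : PreInnerProductSpace.Core ℝ (PreL2 E m) where
  inner f g := m fun x ↦ ⟪f.1 x, g.1 x⟫_ℝ
  conj_inner_symm f g := by simp only [conj_trivial, real_inner_comm]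
  re_inner_nonneg f := m.nonneg (inner_mem_boundedFun f.2 f.2) fun _ ↦ real_inner_self_nonneg
  add_left f g h := by
    rw [← m.map_add]
    congr! with x
    exact inner_add_left _ _ _
  smul_left f g c := by
    rw [conj_trivial, ← m.map_const_mul]
    congr! with x
    exact real_inner_smul_left _ _ _

noncomputable instance : SeminormedAddCommGroup (PreL2 E m) :=
  @InnerProductSpace.Core.toSeminormedAddCommGroup ℝ (PreL2 E m) _ _ _ m.preL2Core

noncomputable instance : InnerProductSpace ℝ (PreL2 E m) :=
  InnerProductSpace.ofCore m.preL2Core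

variable (E) in
/-- The Hilbert space of square-integrable functions `X → E` for the finitely additive
probability `m`: the completion of the space of bounded functions. -/
abbrev L2 (m : Mean X) : Type _ :=
  UniformSpace.Completion (PreL2 E m)

/-- The class in `L2 E m` of a bounded function. -/
noncomputable def toL2 : boundedFun X E →ₗ[ℝ] L2 E m :=
  (UniformSpace.Completion.toComplL (𝕜 := ℝ) (E := PreL2 E m)).toLinearMap

lemma inner_toL2 (f g : boundedFun X E) : ⟪m.toL2 f, m.toL2 g⟫_ℝ = m fun x ↦ ⟪f.1 x, g.1 x⟫_ℝ :=
  UniformSpace.Completion.inner_coe (E := PreL2 E m) f g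

lemma norm_toL2_sq (f : boundedFun X E) : ‖m.toL2 f‖ ^ 2 = m fun x ↦ ‖f.1 x‖ ^ 2 := by
  simp only [← real_inner_self_eq_norm_sq, inner_toL2]

/-- The isometry `y ↦ [x ↦ T x y]` defined by a family `T` of isometries. -/
noncomputable def directIntegral (T : X → H →ₗᵢ[ℝ] E) : H →ₗᵢ[ℝ] L2 E m where
  toLinearMap := m.toL2 ∘ₗ
    { toFun := fun y ↦ ⟨fun x ↦ T x y, ‖y‖, fun x ↦ ((T x).norm_map y).le⟩
      map_add' := fun y z ↦ Subtype.ext <| funext fun x ↦ (T x).map_add y z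
      map_smul' := fun c y ↦ Subtype.ext <| funext fun x ↦ (T x).map_smul c y }
  norm_map' y := by
    rw [← sq_eq_sq₀ (norm_nonneg _) (norm_nonneg _), LinearMap.comp_apply, norm_toL2_sq]
    simp [m.map_const]

lemma inner_directIntegral (T S : X → H →ₗᵢ[ℝ] E) (y z : H) :
    ⟪m.directIntegral T y, m.directIntegral S z⟫_ℝ = m fun x ↦ ⟪T x y, S x z⟫_ℝ :=
  m.inner_toL2 _ _

section Average

variable [CompleteSpace E]

open ContinuousLinearMap (adjoint)

/-- The adjoint of the inclusion of the constants, that is, the integral of `L2` functions. -/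
noncomputable def integral : L2 E m →L[ℝ] E :=
  adjoint (m.directIntegral fun _ ↦ (LinearIsometry.id : E →ₗᵢ[ℝ] E)).toContinuousLinearMap

lemma inner_integral (f : L2 E m) (z : E) :
    ⟪m.integral f, z⟫_ℝ = ⟪f, m.directIntegral (fun _ ↦ LinearIsometry.id) z⟫_ℝ :=
  ContinuousLinearMap.adjoint_inner_left _ _ _

lemma norm_integral_le (f : L2 E m) : ‖m.integral f‖ ≤ ‖f‖ := by
  refine (ContinuousLinearMap.le_of_opNorm_le _ (c := 1) ?_ f).trans_eq (one_mul _)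
  rw [integral, LinearIsometryEquiv.norm_map]
  exact LinearIsometry.norm_toContinuousLinearMap_le _

open Classical in
/-- The (weak) integral of a bounded vector-valued function, and zero for unbounded functions. -/
noncomputable def vectorMean (v : X → E) : E :=
  if h : v ∈ boundedFun X E then m.integral (m.toL2 ⟨v, h⟩) else 0

variable {m}

lemma inner_vectorMean {v : X → E} (hv : v ∈ boundedFun X E) (z : E) :
    ⟪m.vectorMean v, z⟫_ℝ = m fun x ↦ ⟪v x, z⟫_ℝ := by
  rw [vectorMean, dif_pos hv, inner_integral]
  exact m.inner_toL2 _ _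

lemma inner_apply_vectorMean [CompleteSpace H] {v : X → H} (hv : v ∈ boundedFun X H)
    (A : H →L[ℝ] E) (z : E) : ⟪A (m.vectorMean v), z⟫_ℝ = m fun x ↦ ⟪A (v x), z⟫_ℝ := by
  rw [← ContinuousLinearMap.adjoint_inner_right, inner_vectorMean hv]
  simp only [ContinuousLinearMap.adjoint_inner_right]

variable (m)

/-- The average of a family of isometries. -/
noncomputable def operatorMean (T : X → H →ₗᵢ[ℝ] E) : H →L[ℝ] E :=
  m.integral ∘L (m.directIntegral T).toContinuousLinearMap

lemma inner_operatorMean (T : X → H →ₗᵢ[ℝ] E) (y : H) (z : E) :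
    ⟪m.operatorMean T y, z⟫_ℝ = m fun x ↦ ⟪T x y, z⟫_ℝ :=
  (m.inner_integral _ _).trans (m.inner_toL2 _ _)

lemma norm_operatorMean_le (T : X → H →ₗᵢ[ℝ] E) (y : H) : ‖m.operatorMean T y‖ ≤ ‖y‖ :=
  (m.norm_integral_le _).trans_eq ((m.directIntegral T).norm_map y)

end Average

end Mean

end L2

section Orbit

lemma linearIsometry_apply_eq_iff {H E : Type*} [NormedAddCommGroup H] [InnerProductSpace ℝ H]
    [NormedAddCommGroup E] [InnerProductSpace ℝ E] (S T : H →ₗᵢ[ℝ] E) (x : H) :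
    S x = T x ↔ ‖x‖ ^ 2 ≤ ⟪S x, T x⟫_ℝ := by
  have hnorm : ‖S x - T x‖ ^ 2 = 2 * (‖x‖ ^ 2 - ⟪S x, T x⟫_ℝ) := by
    rw [norm_sub_sq_real, S.norm_map, T.norm_map]
    ring
  constructor
  · intro h
    rw [h, real_inner_self_eq_norm_sq, T.norm_map]
  · intro h
    rw [← sub_eq_zero, ← norm_eq_zero, ← sq_eq_zero_iff]
    nlinarith [sq_nonneg ‖S x - T x‖]

variable {K H : Type*} [Field K] [NormedAddCommGroup H] [InnerProductSpace ℝ H]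
  (π : Kˣ →* (H →ₗᵢ[ℝ] H))

open Classical in
/-- The operator `π a`, extended by the identity at `a = 0`. -/
noncomputable def act (a : K) : H →ₗᵢ[ℝ] H :=
  if ha : a = 0 then LinearIsometry.id else π (Units.mk0 a ha)

lemma act_of_ne_zero {a : K} (ha : a ≠ 0) : act π a = π (Units.mk0 a ha) :=
  dif_neg ha

lemma act_one (x : H) : act π 1 x = x := by
  rw [act_of_ne_zero π one_ne_zero, Units.mk0_one, map_one]
  rfl

lemma act_mul {a b : K} (ha : a ≠ 0) (hb : b ≠ 0) (x : H) :
    act π (a * b) x = act π a (act π b x) := by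
  rw [act_of_ne_zero π ha, act_of_ne_zero π hb, act_of_ne_zero π (mul_ne_zero ha hb),
    Units.mk0_mul, map_mul]
  rfl

lemma inner_act_act {a b : K} (ha : a ≠ 0) (hb : b ≠ 0) (x y : H) :
    ⟪act π a x, act π b y⟫_ℝ = ⟪x, act π (b / a) y⟫_ℝ := by
  rw [← (act π a).inner_map_map x, ← act_mul π ha (div_ne_zero hb ha), mul_div_cancel₀ b ha]

lemma inner_act_act_congr {a b a' b' : K} (ha : a ≠ 0) (hb : b ≠ 0) (ha' : a' ≠ 0)
    (h : b / a = b' / a') (x y : H) :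
    ⟪act π a x, act π b y⟫_ℝ = ⟪act π a' x, act π b' y⟫_ℝ := by
  have hb' : b' ≠ 0 := by
    rintro rfl
    exact div_ne_zero hb ha (h.trans (zero_div _))
  rw [inner_act_act π ha hb, inner_act_act π ha' hb', h]

namespace Mean

variable (m : Mean K)

/-- The isometry which maps `x` to the function `θ ↦ π (g θ) x`. -/
noncomputable def orbit (g : K → K) : H →ₗᵢ[ℝ] L2 H m :=
  m.directIntegral fun θ ↦ act π (g θ)

variable {π}

lemma inner_orbit (g h : K → K) (x y : H) :
    ⟪m.orbit π g x, m.orbit π h y⟫_ℝ = m fun θ ↦ ⟪act π (g θ) x, act π (h θ) y⟫_ℝ :=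
  m.inner_directIntegral _ _ _ _

namespace IsAffineInvariant

variable {m} (hm : m.IsAffineInvariant)
include hm

lemma inner_orbit_comp (g h : K → K) (x y : H) {A : K} (hA : A ≠ 0) (B : K) :
    ⟪m.orbit π (fun θ ↦ g (A * θ + B)) x, m.orbit π (fun θ ↦ h (A * θ + B)) y⟫_ℝ =
      ⟪m.orbit π g x, m.orbit π h y⟫_ℝ := by
  rw [inner_orbit, inner_orbit]
  exact hm A B hA _ (inner_mem_boundedFun (f := fun θ ↦ act π (g θ) x)
    (boundedFun_of_forall_norm_eq fun θ ↦ (act π _).norm_map x)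
    (boundedFun_of_forall_norm_eq fun θ ↦ (act π _).norm_map y))

variable [CharZero K]

lemma inner_orbit_congr {g h g' h' : K → K}
    (hgh : ∀ᶠ θ in cofinite, g θ ≠ 0 ∧ h θ ≠ 0 ∧ g' θ ≠ 0 ∧ h θ / g θ = h' θ / g' θ) (x y : H) :
    ⟪m.orbit π g x, m.orbit π h y⟫_ℝ = ⟪m.orbit π g' x, m.orbit π h' y⟫_ℝ := by
  rw [inner_orbit, inner_orbit]
  exact hm.congr (hgh.mono fun θ ⟨hg, hh, hg', heq⟩ ↦ inner_act_act_congr π hg hh hg' heq x y)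

lemma orbit_eq_congr {g h g' h' : K → K}
    (hgh : ∀ᶠ θ in cofinite, g θ ≠ 0 ∧ h θ ≠ 0 ∧ g' θ ≠ 0 ∧ h θ / g θ = h' θ / g' θ) {x : H}
    (hx : m.orbit π g x = m.orbit π h x) : m.orbit π g' x = m.orbit π h' x := by
  rw [linearIsometry_apply_eq_iff] at hx ⊢
  rwa [← hm.inner_orbit_congr hgh]

end IsAffineInvariant

end Mean

end Orbit

section ShiftOrbit

lemma norm_sum_le_of_pairwise_inner_eq_zero {ι E : Type*} [NormedAddCommGroup E]
    [InnerProductSpace ℝ E] {s : Finset ι} {v : ι → E}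
    (h : (s : Set ι).Pairwise fun i j ↦ ⟪v i, v j⟫_ℝ = 0) {C : ℝ} (hC : 0 ≤ C)
    (hv : ∀ i ∈ s, ‖v i‖ ≤ C) : ‖∑ i ∈ s, v i‖ ≤ C * √s.card := by
  have hsq : ‖∑ i ∈ s, v i‖ ^ 2 = ∑ i ∈ s, ‖v i‖ ^ 2 := by
    rw [← real_inner_self_eq_norm_sq, sum_inner]
    refine Finset.sum_congr rfl fun i hi ↦ ?_
    rw [inner_sum, Finset.sum_eq_single_of_mem i hi fun j hj hji ↦ h hi hj hji.symm,
      real_inner_self_eq_norm_sq]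
  refine le_of_sq_le_sq ?_ (by positivity)
  calc ‖∑ i ∈ s, v i‖ ^ 2 = ∑ i ∈ s, ‖v i‖ ^ 2 := hsq
    _ ≤ ∑ _i ∈ s, C ^ 2 := Finset.sum_le_sum fun i hi ↦
      pow_le_pow_left₀ (norm_nonneg _) (hv i hi) 2
    _ = (C * √s.card) ^ 2 := by
      rw [Finset.sum_const, nsmul_eq_mul, mul_pow, Real.sq_sqrt (Nat.cast_nonneg _), mul_comm]

variable {K H : Type*} [Field K] [NormedAddCommGroup H] [InnerProductSpace ℝ H]
  (π : Kˣ →* (H →ₗᵢ[ℝ] H))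

namespace Mean

variable (m : Mean K)

/-- The isometry which maps `x` to the function `θ ↦ π (θ - u) x`. -/
noncomputable def shiftOrbit (u : K) : H →ₗᵢ[ℝ] L2 H m :=
  m.orbit π fun θ ↦ θ - u

/-- The average of the isometries `shiftOrbit`. -/
noncomputable def meanShiftOrbit : H →L[ℝ] L2 H m :=
  m.operatorMean (m.shiftOrbit π)

/-- The deviation of `shiftOrbit` from its average. -/
noncomputable def shiftDeviation (u : K) (x : H) : L2 H m :=
  m.shiftOrbit π u x - m.meanShiftOrbit π x

lemma inner_meanShiftOrbit (x : H) (z : L2 H m) :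
    ⟪m.meanShiftOrbit π x, z⟫_ℝ = m fun u ↦ ⟪m.shiftOrbit π u x, z⟫_ℝ :=
  m.inner_operatorMean _ _ _

lemma norm_shiftDeviation_le (u : K) (x : H) : ‖m.shiftDeviation π u x‖ ≤ 2 * ‖x‖ :=
  calc ‖m.shiftDeviation π u x‖ ≤ ‖m.shiftOrbit π u x‖ + ‖m.meanShiftOrbit π x‖ := norm_sub_le _ _
    _ ≤ ‖x‖ + ‖x‖ := add_le_add ((m.shiftOrbit π u).norm_map x).le (m.norm_operatorMean_le _ x)
    _ = 2 * ‖x‖ := (two_mul _).symm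

namespace IsAffineInvariant

variable {m π} [CharZero K] (hm : m.IsAffineInvariant)
include hm

lemma inner_shiftOrbit_eq {u u' : K} (h : u ≠ u') (x y : H) :
    ⟪m.shiftOrbit π u x, m.shiftOrbit π u' y⟫_ℝ = ⟪m.shiftOrbit π 1 x, m.shiftOrbit π 0 y⟫_ℝ := by
  have hne : u - u' ≠ 0 := sub_ne_zero.2 h
  unfold shiftOrbit
  rw [← hm.inner_orbit_comp _ _ x y hne u']
  refine hm.inner_orbit_congr ?_ x y
  filter_upwards [eventually_cofinite_ne 0, eventually_cofinite_ne 1] with θ h0 h1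
  have h1' : θ - 1 ≠ 0 := sub_ne_zero.2 h1
  have hfactor : (u - u') * θ + u' - u = (u - u') * (θ - 1) := by ring
  rw [hfactor, add_sub_cancel_right, sub_zero]
  exact ⟨mul_ne_zero hne h1', mul_ne_zero hne h0, h1', mul_div_mul_left _ _ hne⟩

lemma inner_meanShiftOrbit_shiftOrbit (u : K) (x y : H) :
    ⟪m.meanShiftOrbit π x, m.shiftOrbit π u y⟫_ℝ =
      ⟪m.shiftOrbit π 1 x, m.shiftOrbit π 0 y⟫_ℝ := by
  rw [inner_meanShiftOrbit]
  refine (hm.congr ?_).trans (m.map_const _)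
  filter_upwards [eventually_cofinite_ne u] with v hv
  exact hm.inner_shiftOrbit_eq hv x y

lemma inner_shiftOrbit_meanShiftOrbit (u : K) (x y : H) :
    ⟪m.shiftOrbit π u x, m.meanShiftOrbit π y⟫_ℝ =
      ⟪m.shiftOrbit π 1 x, m.shiftOrbit π 0 y⟫_ℝ := by
  rw [real_inner_comm, hm.inner_meanShiftOrbit_shiftOrbit, real_inner_comm,
    hm.inner_shiftOrbit_eq zero_ne_one]

lemma inner_meanShiftOrbit_meanShiftOrbit (x y : H) :
    ⟪m.meanShiftOrbit π x, m.meanShiftOrbit π y⟫_ℝ =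
      ⟪m.shiftOrbit π 1 x, m.shiftOrbit π 0 y⟫_ℝ := by
  simp only [inner_meanShiftOrbit, hm.inner_shiftOrbit_meanShiftOrbit, map_const]

lemma inner_shiftOrbit_shiftOrbit {u u' : K} (h : u ≠ u') (x y : H) :
    ⟪m.shiftOrbit π u x, m.shiftOrbit π u' y⟫_ℝ =
      ⟪m.meanShiftOrbit π x, m.meanShiftOrbit π y⟫_ℝ :=
  (hm.inner_shiftOrbit_eq h x y).trans (hm.inner_meanShiftOrbit_meanShiftOrbit x y).symm

lemma inner_shiftDeviation {u u' : K} (h : u ≠ u') (x y : H) :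
    ⟪m.shiftDeviation π u x, m.shiftDeviation π u' y⟫_ℝ = 0 := by
  simp only [shiftDeviation, inner_sub_left, inner_sub_right, hm.inner_shiftOrbit_eq h,
    hm.inner_shiftOrbit_meanShiftOrbit, hm.inner_meanShiftOrbit_shiftOrbit,
    hm.inner_meanShiftOrbit_meanShiftOrbit, sub_self]

lemma shiftOrbit_eq_of_norm_le {x : H} (h : ‖x‖ ≤ ‖m.meanShiftOrbit π x‖) (u u' : K) :
    m.shiftOrbit π u x = m.shiftOrbit π u' x := by
  rcases eq_or_ne u u' with rfl | hne
  · rfl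
  · rw [linearIsometry_apply_eq_iff, hm.inner_shiftOrbit_shiftOrbit hne, real_inner_self_eq_norm_sq]
    gcongr

end IsAffineInvariant

end Mean

end ShiftOrbit

section Decoupling

variable {K H : Type*} [Field K] [CharZero K] [NormedAddCommGroup H] [InnerProductSpace ℝ H]
  {π : Kˣ →* (H →ₗᵢ[ℝ] H)} {m N : Mean K}

namespace Mean.IsAffineInvariant

/-- Averaging over the dilates `t, 2t, 3t, …` makes the `x`-dependent vector `V x` face a sum of
pairwise orthogonal deviations, whose norm is only `O(√n)`. -/
lemma inner_shiftDeviation_eq_zero (hm : m.IsAffineInvariant) (hN : N.IsAffineInvariant)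
    {V : K → L2 H m} (hV : V ∈ boundedFun K (L2 H m)) {y : K → K → K}
    (hy : ∀ t ≠ 0, ∀ i j : ℕ, i ≠ j → ∀ᶠ x in cofinite, y ((i + 1) * t) x ≠ y ((j + 1) * t) x)
    {b : K → K → H} {C : ℝ} (hb : ∀ t x, ‖b t x‖ ≤ C) :
    (N fun t ↦ N fun x ↦ ⟪V x, m.shiftDeviation π (y t x) (b t x)⟫_ℝ) = 0 := by
  obtain ⟨D, hD⟩ := hV
  have hD0 : 0 ≤ D := (norm_nonneg _).trans (hD 0)
  have hC0 : 0 ≤ C := (norm_nonneg _).trans (hb 0 0)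
  have hdev (t x : K) : ‖m.shiftDeviation π (y t x) (b t x)‖ ≤ 2 * C :=
    (m.norm_shiftDeviation_le π _ _).trans (by gcongr; exact hb t x)
  have hinner (t x : K) : ‖⟪V x, m.shiftDeviation π (y t x) (b t x)⟫_ℝ‖ ≤ D * (2 * C) :=
    (norm_inner_le_norm _ _).trans (mul_le_mul (hD x) (hdev t x) (norm_nonneg _) hD0)
  refine hN.eq_zero_of_eventually_abs_sum_le (T := fun j t ↦ ((j : K) + 1) * t + 0)
    (C := D * (2 * C)) (fun j ↦ hN _ 0 (Nat.cast_add_one_ne_zero j))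
    (comp_mem_boundedFun hinner fun _ ↦ N) fun n ↦ ?_
  filter_upwards [eventually_cofinite_ne 0] with t ht
  simp only [add_zero]
  rw [← map_sum]
  simp only [← inner_sum]
  refine hN.abs_le_of_eventually ?_
  have hdistinct : ∀ᶠ x in cofinite, ∀ i ∈ Finset.range n, ∀ j ∈ Finset.range n, i ≠ j →
      y ((i + 1) * t) x ≠ y ((j + 1) * t) x :=
    (Filter.eventually_all_finset _).2 fun i _ ↦ (Filter.eventually_all_finset _).2 fun j _ ↦
      eventually_imp_distrib_left.2 fun hij ↦ hy t ht i j hij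
  filter_upwards [hdistinct] with x hx
  calc |⟪V x, ∑ j ∈ Finset.range n,
        m.shiftDeviation π (y ((j + 1) * t) x) (b ((j + 1) * t) x)⟫_ℝ|
      ≤ D * (2 * C * √n) := by
        refine (abs_real_inner_le_norm _ _).trans
          (mul_le_mul (hD x) ?_ (norm_nonneg _) hD0)
        have hsum := norm_sum_le_of_pairwise_inner_eq_zero (s := Finset.range n)
          (v := fun j ↦ m.shiftDeviation π (y ((j + 1) * t) x) (b ((j + 1) * t) x))
          (fun i hi j hj hij ↦ hm.inner_shiftDeviation (hx i hi j hj hij) _ _)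
          (by positivity) fun j _ ↦ hdev _ x
        rwa [Finset.card_range] at hsum
    _ = D * (2 * C) * √n := (mul_assoc _ _ _).symm

lemma inner_shiftOrbit_eq_inner_meanShiftOrbit (hm : m.IsAffineInvariant)
    (hN : N.IsAffineInvariant) {V : K → L2 H m} (hV : V ∈ boundedFun K (L2 H m)) {y : K → K → K}
    (hy : ∀ t ≠ 0, ∀ i j : ℕ, i ≠ j → ∀ᶠ x in cofinite, y ((i + 1) * t) x ≠ y ((j + 1) * t) x)
    {b : K → K → H} {C : ℝ} (hb : ∀ t x, ‖b t x‖ ≤ C) :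
    (N fun t ↦ N fun x ↦ ⟪V x, m.shiftOrbit π (y t x) (b t x)⟫_ℝ) =
      N fun t ↦ N fun x ↦ ⟪V x, m.meanShiftOrbit π (b t x)⟫_ℝ := by
  rw [← sub_eq_zero, ← hm.inner_shiftDeviation_eq_zero hN hV hy hb (π := π)]
  simp only [shiftDeviation, inner_sub_right, map_sub]

end Mean.IsAffineInvariant

end Decoupling

section Cotangent

variable {K : Type*} [Field K]

/-- The addition law of the cotangent, for the conic `X ^ 2 + e * Y ^ 2`: the slope of the product
of two elements of `K[√(-e)]` with slopes `t` and `θ`. -/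
def cotAdd (e t θ : K) : K :=
  (t * θ - e) / (t + θ)

/-- The ratio `c * (m ^ 2 + e * n ^ 2) / (m * n)` as a function of the slope `t = m / n`. -/
def ratio (e c t : K) : K :=
  c * (t ^ 2 + e) / t

variable {e c t : K}

lemma ratio_ne_zero_iff : ratio e c t ≠ 0 ↔ c ≠ 0 ∧ t ^ 2 + e ≠ 0 ∧ t ≠ 0 := by
  simp only [ratio, ne_eq, div_eq_zero_iff, mul_eq_zero, not_or, and_assoc]

lemma ratio_cotAdd {θ : K} (ht : t ≠ 0) (h : θ + t ≠ 0) (h' : θ - e / t ≠ 0) :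
    ratio e c (cotAdd e t θ) = ratio e c t * ((θ ^ 2 + e) / ((θ + t) * (θ - e / t))) := by
  have hnum : t * θ - e ≠ 0 := by
    rw [sub_ne_zero, ne_eq, eq_div_iff ht] at h'
    rwa [sub_ne_zero, mul_comm]
  have hden : t + θ ≠ 0 := by rwa [add_comm]
  rw [cotAdd, ratio, ratio]
  field_simp
  ring

lemma cotAdd_neg_mul_sub {θ : K} (h : t ^ 2 + e ≠ 0) (hθ : θ ≠ 0) :
    cotAdd e t (-(t ^ 2 + e) * θ - t) = t + θ⁻¹ := by
  have hden : t + (-(t ^ 2 + e) * θ - t) = -((t ^ 2 + e) * θ) := by ring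
  rw [cotAdd, hden, div_eq_iff (neg_ne_zero.2 (mul_ne_zero h hθ))]
  field_simp
  ring

lemma eventually_quadratic_ne_zero {a : K} (ha : a ≠ 0) (b d : K) :
    ∀ᶠ t in cofinite, a * t ^ 2 + b * t + d ≠ 0 := by
  open Polynomial in
  have hp : C a * X ^ 2 + C b * X + C d ≠ 0 := fun h ↦ by
    simpa [h] using degree_quadratic (b := b) (c := d) ha
  filter_upwards [(Polynomial.finite_setOfPred_isRoot hp).compl_mem_cofinite] with t ht
  simpa using ht

lemma eventually_ratio_ne (e : K) (hc : c ≠ 0) (d : K) : ∀ᶠ t in cofinite, ratio e c t ≠ d := by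
  filter_upwards [eventually_quadratic_ne_zero hc (-d) (c * e), eventually_cofinite_ne 0]
    with t hquad ht heq
  rw [ratio, div_eq_iff ht] at heq
  exact hquad (by linear_combination heq)

lemma eventually_ratio_ne_zero (e : K) (hc : c ≠ 0) : ∀ᶠ t in cofinite, ratio e c t ≠ 0 :=
  eventually_ratio_ne e hc 0

/-- The parameter `s` for which the pair of zeros `-s`, `e / s` is in relative position `x`, and
`secondPole e t x`, with respect to the pair `-t`, `e / t`. -/
def relParam (e t x : K) : K :=
  t - x * (t + e / t)

/-- See `relParam`. -/
def secondPole (e t x : K) : K :=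
  (1 - x) / (1 - x * (1 + e / t ^ 2))

lemma add_div_ne_zero (ht : t ≠ 0) (hte : t ^ 2 + e ≠ 0) : t + e / t ≠ 0 := by
  rw [add_div' _ _ _ ht, ← sq]
  exact div_ne_zero hte ht

lemma eventually_ratio_relParam_ne_zero (ht : ratio e c t ≠ 0) :
    ∀ᶠ x in cofinite, ratio e c (relParam e t x) ≠ 0 := by
  obtain ⟨hc, hte, ht⟩ := ratio_ne_zero_iff.1 ht
  have hinj : Function.Injective (relParam e t) := fun x x' h ↦
    mul_right_cancel₀ (add_div_ne_zero ht hte) (sub_right_injective h)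
  exact hinj.tendsto_cofinite.eventually (eventually_ratio_ne_zero e hc)

lemma div_relParam {x : K} (ht : t ≠ 0) (hs : relParam e t x ≠ 0) :
    e / relParam e t x = (t + e / t) * secondPole e t x - t := by
  have hden : 1 - x * (1 + e / t ^ 2) = relParam e t x / t := by
    rw [relParam]
    field_simp
  rw [secondPole, hden, eq_sub_iff_add_eq, div_div_eq_mul_div, mul_div_assoc', div_add' _ _ _ hs]
  congr 1
  rw [relParam]
  field_simp
  ring

lemma eventually_secondPole_ne [CharZero K] (he : e ≠ 0) (ht : t ≠ 0) {i j : ℕ} (hij : i ≠ j) :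
    ∀ᶠ x in cofinite, secondPole e ((i + 1) * t) x ≠ secondPole e ((j + 1) * t) x := by
  filter_upwards [eventually_cofinite_ne 0, eventually_cofinite_ne 1] with x h0 h1 heq
  simp only [secondPole, div_eq_mul_inv, mul_right_inj' (sub_ne_zero.2 h1.symm), inv_inj,
    sub_right_inj, mul_right_inj' h0, add_right_inj, mul_right_inj' he, mul_pow,
    mul_left_inj' (pow_ne_zero 2 ht)] at heq
  have hsq : (i + 1) ^ 2 = (j + 1) ^ 2 := by exact_mod_cast heq
  exact hij (Nat.succ_injective (Nat.pow_left_injective two_ne_zero hsq))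

end Cotangent

section Rigidity

variable {K H : Type*} [Field K] [NormedAddCommGroup H] [InnerProductSpace ℝ H]
  (π : Kˣ →* (H →ₗᵢ[ℝ] H))

/-- The vectors `π (ratio e c t)⁻¹ ξ`, whose correlations with `ξ` are to be shown positive. -/
noncomputable def ratioTranslate (e c : K) (ξ : H) (t : K) : H :=
  act π (ratio e c t)⁻¹ ξ

lemma norm_ratioTranslate (e c : K) (ξ : H) (t : K) : ‖ratioTranslate π e c ξ t‖ = ‖ξ‖ :=
  (act π _).norm_map ξ

lemma ratioTranslate_mem_boundedFun (e c : K) (ξ : H) : ratioTranslate π e c ξ ∈ boundedFun K H :=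
  boundedFun_of_forall_norm_eq (norm_ratioTranslate π e c ξ)

namespace Mean

variable (m : Mean K)

/-- The isometry which maps `x` to the function `θ ↦ π ((θ + t) (θ - e / t)) x`; the product is,
up to the factor `θ ^ 2 + e`, the quotient of `ratio` at `t` by `ratio` at `cotAdd e t θ`. -/
noncomputable def cotOrbit (e t : K) : H →ₗᵢ[ℝ] L2 H m :=
  m.orbit π fun θ ↦ (θ + t) * (θ - e / t)

/-- The isometry which maps `x` to the function `θ ↦ π (θ (θ - 1) / (θ - v)) x`. -/
noncomputable def poleOrbit (v : K) : H →ₗᵢ[ℝ] L2 H m :=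
  m.orbit π fun θ ↦ θ * (θ - 1) / (θ - v)

/-- The average of the isometries `poleOrbit`. -/
noncomputable def meanPoleOrbit : H →L[ℝ] L2 H m :=
  m.operatorMean (m.poleOrbit π)

lemma inner_meanPoleOrbit (x : H) (z : L2 H m) :
    ⟪m.meanPoleOrbit π x, z⟫_ℝ = m fun v ↦ ⟪m.poleOrbit π v x, z⟫_ℝ :=
  m.inner_operatorMean _ _ _

/-- The average of the vectors `ratioTranslate`. -/
noncomputable def ratioMean [CompleteSpace H] (e c : K) (ξ : H) : H :=
  m.vectorMean (ratioTranslate π e c ξ)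

lemma inner_ratioMean [CompleteSpace H] (e c : K) (ξ y : H) :
    ⟪m.ratioMean π e c ξ, y⟫_ℝ = m fun t ↦ ⟪ratioTranslate π e c ξ t, y⟫_ℝ :=
  inner_vectorMean (ratioTranslate_mem_boundedFun π e c ξ) y

namespace IsAffineInvariant

variable {π m} [CharZero K] (hm : m.IsAffineInvariant)
include hm

lemma orbit_act {g : K → K} (hg : ∀ᶠ θ in cofinite, g θ ≠ 0) {a : K} (ha : a ≠ 0) (x : H) :
    m.orbit π g (act π a x) = m.orbit π (fun θ ↦ g θ * a) x := by
  refine (linearIsometry_apply_eq_iff ((m.orbit π g).comp (act π a)) _ x).2 (Eq.le ?_)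
  rw [LinearIsometry.coe_comp, Function.comp_apply, inner_orbit, ← m.map_const (‖x‖ ^ 2)]
  refine hm.congr (hg.mono fun θ hθ ↦ ?_)
  simp only [act_mul π hθ ha, real_inner_self_eq_norm_sq, LinearIsometry.norm_map]

variable {e c t : K}

lemma mean_inner_ratioTranslate_cotAdd (h : ratio e c t ≠ 0) (ξ y : H) :
    (m fun θ ↦ ⟪ratioTranslate π e c ξ (cotAdd e t θ), y⟫_ℝ) =
      ⟪m.cotOrbit π e t (ratioTranslate π e c ξ t), m.orbit π (fun θ ↦ θ ^ 2 + e) y⟫_ℝ := by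
  obtain ⟨-, -, ht⟩ := ratio_ne_zero_iff.1 h
  have hgood : ∀ᶠ θ in cofinite, θ + t ≠ 0 ∧ θ - e / t ≠ 0 ∧ θ ^ 2 + e ≠ 0 := by
    filter_upwards [eventually_cofinite_ne (-t), eventually_cofinite_ne (e / t),
      eventually_quadratic_ne_zero one_ne_zero 0 e] with θ h1 h2 h3
    exact ⟨mt eq_neg_of_add_eq_zero_left h1, sub_ne_zero.2 h2, by simpa using h3⟩
  rw [cotOrbit, ratioTranslate, hm.orbit_act (hgood.mono fun θ hθ ↦ mul_ne_zero hθ.1 hθ.2.1)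
    (inv_ne_zero h), inner_orbit]
  refine hm.congr (hgood.mono fun θ ⟨h1, h2, h3⟩ ↦ ?_)
  have hratio := ratio_cotAdd (c := c) ht h1 h2
  have hne : ratio e c (cotAdd e t θ) ≠ 0 := by
    rw [hratio]
    exact mul_ne_zero h (div_ne_zero h3 (mul_ne_zero h1 h2))
  nth_rewrite 1 [← act_one π y]
  refine inner_act_act_congr π (inv_ne_zero hne) one_ne_zero
    (mul_ne_zero (mul_ne_zero h1 h2) (inv_ne_zero h)) ?_ ξ y
  rw [one_div, inv_inv, hratio]
  field_simp

/-- The affine substitution `θ ↦ (t + e / t) θ - t` moves the zeros `-t`, `e / t` to `0`, `1`. -/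
lemma inner_cotOrbit_cotOrbit {x : K} (h : ratio e c t ≠ 0)
    (h' : ratio e c (relParam e t x) ≠ 0) (ξ : H) :
    ⟪m.cotOrbit π e t (ratioTranslate π e c ξ t),
        m.cotOrbit π e (relParam e t x) (ratioTranslate π e c ξ (relParam e t x))⟫_ℝ =
      ⟪m.poleOrbit π x ξ, m.shiftOrbit π (secondPole e t x)
        (act π (ratio e c t / ratio e c (relParam e t x)) ξ)⟫_ℝ := by
  obtain ⟨-, hte, ht⟩ := ratio_ne_zero_iff.1 h
  obtain ⟨-, -, hs⟩ := ratio_ne_zero_iff.1 h'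
  have hp := add_div_ne_zero ht hte
  have hdiv := div_relParam ht hs
  have hgood (a b : K) : ∀ᶠ θ in cofinite, (θ + a) * (θ - b) ≠ 0 := by
    filter_upwards [eventually_cofinite_ne (-a), eventually_cofinite_ne b] with θ h1 h2
    exact mul_ne_zero (mt eq_neg_of_add_eq_zero_left h1) (sub_ne_zero.2 h2)
  unfold cotOrbit ratioTranslate shiftOrbit
  rw [hm.orbit_act (hgood _ _) (inv_ne_zero h), hm.orbit_act (hgood _ _) (inv_ne_zero h'),
    hm.orbit_act ((eventually_cofinite_ne _).mono fun _ ↦ sub_ne_zero.2) (div_ne_zero h h'),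
    ← hm.inner_orbit_comp _ _ ξ ξ hp (-t)]
  refine hm.inner_orbit_congr ?_ ξ ξ
  filter_upwards [eventually_cofinite_ne 0, eventually_cofinite_ne 1, eventually_cofinite_ne x,
    eventually_cofinite_ne (secondPole e t x)] with θ h0 h1 hx hy
  replace h1 := sub_ne_zero.2 h1
  replace hx := sub_ne_zero.2 hx
  replace hy := sub_ne_zero.2 hy
  have hzero : (t + e / t) * θ + -t + t = (t + e / t) * θ := by ring
  have hone : (t + e / t) * θ + -t - e / t = (t + e / t) * (θ - 1) := by ring
  have hfirst : (t + e / t) * θ + -t + relParam e t x = (t + e / t) * (θ - x) := by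
    rw [relParam]
    ring
  have hsecond : (t + e / t) * θ + -t - e / relParam e t x =
      (t + e / t) * (θ - secondPole e t x) := by
    rw [hdiv]
    ring
  rw [hzero, hone, hfirst, hsecond]
  generalize ratio e c t = r, ratio e c (relParam e t x) = r', t + e / t = p at *
  exact ⟨mul_ne_zero (mul_ne_zero (mul_ne_zero hp h0) (mul_ne_zero hp h1)) (inv_ne_zero h),
    mul_ne_zero (mul_ne_zero (mul_ne_zero hp hx) (mul_ne_zero hp hy)) (inv_ne_zero h'),
    div_ne_zero (mul_ne_zero h0 h1) hx, by field_simp⟩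

end IsAffineInvariant

end Mean

end Rigidity

section Correlation

variable {K H : Type*} [Field K] [CharZero K] [NormedAddCommGroup H] [InnerProductSpace ℝ H]
  {π : Kˣ →* (H →ₗᵢ[ℝ] H)} {m N : Mean K} {e c : K}

namespace Mean.IsAffineInvariant

lemma mean_relParam (hN : N.IsAffineInvariant) {t : K} (ht : t ≠ 0) (hte : t ^ 2 + e ≠ 0)
    {f : K → ℝ} (hf : f ∈ boundedFun K ℝ) : (N fun x ↦ f (relParam e t x)) = N f := by
  rw [← hN _ t (neg_ne_zero.2 (add_div_ne_zero ht hte)) f hf]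
  congr! 3 with x
  rw [relParam]
  ring

variable (hm : m.IsAffineInvariant)
include hm

lemma inner_poleOrbit_shiftOrbit_comm (u v : K) (x y : H) :
    ⟪m.poleOrbit π u x, m.shiftOrbit π v y⟫_ℝ = ⟪m.poleOrbit π v x, m.shiftOrbit π u y⟫_ℝ := by
  refine hm.inner_orbit_congr ?_ x y
  filter_upwards [eventually_cofinite_ne 0, eventually_cofinite_ne 1, eventually_cofinite_ne u,
    eventually_cofinite_ne v] with θ h0 h1 hu hv
  replace h1 := sub_ne_zero.2 h1
  replace hu := sub_ne_zero.2 hu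
  replace hv := sub_ne_zero.2 hv
  exact ⟨div_ne_zero (mul_ne_zero h0 h1) hu, hv, div_ne_zero (mul_ne_zero h0 h1) hv,
    by field_simp⟩

lemma inner_poleOrbit_meanShiftOrbit (u : K) (x y : H) :
    ⟪m.poleOrbit π u x, m.meanShiftOrbit π y⟫_ℝ = ⟪m.meanPoleOrbit π x, m.shiftOrbit π u y⟫_ℝ := by
  rw [real_inner_comm, inner_meanShiftOrbit, inner_meanPoleOrbit]
  refine congrArg m (funext fun v ↦ ?_)
  rw [real_inner_comm, hm.inner_poleOrbit_shiftOrbit_comm]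

lemma inner_meanPoleOrbit_act {a b : K} (ha : a ≠ 0) (hb : b ≠ 0) (x y : H) :
    ⟪m.meanPoleOrbit π (act π a x), m.meanShiftOrbit π (act π b y)⟫_ℝ =
      ⟪m.meanPoleOrbit π x, m.meanShiftOrbit π (act π (b / a) y)⟫_ℝ := by
  have hgood (u v : K) : ∀ᶠ θ in cofinite, θ * (θ - 1) / (θ - u) ≠ 0 ∧ θ - v ≠ 0 := by
    filter_upwards [eventually_cofinite_ne 0, eventually_cofinite_ne 1, eventually_cofinite_ne u,
      eventually_cofinite_ne v] with θ h0 h1 hu hv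
    exact ⟨div_ne_zero (mul_ne_zero h0 (sub_ne_zero.2 h1)) (sub_ne_zero.2 hu), sub_ne_zero.2 hv⟩
  have hinner (u v : K) : ⟪m.shiftOrbit π v (act π b y), m.poleOrbit π u (act π a x)⟫_ℝ =
      ⟪m.shiftOrbit π v (act π (b / a) y), m.poleOrbit π u x⟫_ℝ := by
    unfold shiftOrbit poleOrbit
    rw [hm.orbit_act ((hgood u v).mono fun _ h ↦ h.2) hb,
      hm.orbit_act ((hgood u v).mono fun _ h ↦ h.1) ha,
      hm.orbit_act ((hgood u v).mono fun _ h ↦ h.2) (div_ne_zero hb ha)]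
    refine hm.inner_orbit_congr ((hgood u v).mono fun θ ⟨h1, h2⟩ ↦ ?_) y x
    exact ⟨mul_ne_zero h2 hb, mul_ne_zero h1 ha, mul_ne_zero h2 (div_ne_zero hb ha),
      by field_simp⟩
  have hexpand (x y : H) : ⟪m.meanPoleOrbit π x, m.meanShiftOrbit π y⟫_ℝ =
      m fun u ↦ m fun v ↦ ⟪m.shiftOrbit π v y, m.poleOrbit π u x⟫_ℝ := by
    rw [inner_meanPoleOrbit]
    refine congrArg m (funext fun u ↦ ?_)
    rw [real_inner_comm, inner_meanShiftOrbit]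
  simp only [hexpand, hinner]

variable (hN : N.IsAffineInvariant)
include hN

lemma mean_mean_inner_cotOrbit_eq_poleOrbit (hc : c ≠ 0) (ξ : H) :
    (N fun t ↦ N fun s ↦ ⟪m.cotOrbit π e t (ratioTranslate π e c ξ t),
        m.cotOrbit π e s (ratioTranslate π e c ξ s)⟫_ℝ) =
      N fun t ↦ N fun x ↦ ⟪m.poleOrbit π x ξ, m.shiftOrbit π (secondPole e t x)
        (act π (ratio e c t / ratio e c (relParam e t x)) ξ)⟫_ℝ := by
  refine hN.congr ((eventually_ratio_ne_zero e hc).mono fun t h ↦ ?_)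
  obtain ⟨-, hte, ht⟩ := ratio_ne_zero_iff.1 h
  have hnorm (s : K) : ‖m.cotOrbit π e s (ratioTranslate π e c ξ s)‖ = ‖ξ‖ :=
    (LinearIsometry.norm_map _ _).trans (norm_ratioTranslate π e c ξ s)
  have hbounded := inner_mem_boundedFun (boundedFun_of_forall_norm_eq fun _ ↦ hnorm t)
    (boundedFun_of_forall_norm_eq hnorm)
  exact (hN.mean_relParam ht hte hbounded).symm.trans
    (hN.congr ((eventually_ratio_relParam_ne_zero h).mono fun x h' ↦
      hm.inner_cotOrbit_cotOrbit h h' ξ))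

lemma mean_inner_meanPoleOrbit_shiftOrbit (x : H) {b : K → H} {C : ℝ} (hb : ∀ u, ‖b u‖ ≤ C) :
    (N fun u ↦ ⟪m.meanPoleOrbit π x, m.shiftOrbit π u (b u)⟫_ℝ) =
      N fun u ↦ ⟪m.meanPoleOrbit π x, m.meanShiftOrbit π (b u)⟫_ℝ := by
  have hdistinct : ∀ u ≠ 0, ∀ i j : ℕ, i ≠ j →
      ∀ᶠ _ in cofinite (α := K), ((i : K) + 1) * u ≠ (j + 1) * u := fun u hu i j hij ↦
    Eventually.of_forall fun _ ↦ by simpa [hu] using hij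
  simpa only [map_const] using hm.inner_shiftOrbit_eq_inner_meanShiftOrbit hN (π := π)
    (boundedFun_of_forall_norm_eq fun _ ↦ rfl) (y := fun u _ ↦ u) hdistinct (fun u _ ↦ hb u)

lemma mean_inner_meanPoleOrbit_relParam {t : K} (h : ratio e c t ≠ 0) (ξ : H) :
    (N fun x ↦ ⟪m.meanPoleOrbit π ξ,
        m.meanShiftOrbit π (act π (ratio e c t / ratio e c (relParam e t x)) ξ)⟫_ℝ) =
      N fun s ↦ ⟪m.meanPoleOrbit π (ratioTranslate π e c ξ t),
        m.meanShiftOrbit π (ratioTranslate π e c ξ s)⟫_ℝ := by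
  obtain ⟨-, hte, ht⟩ := ratio_ne_zero_iff.1 h
  have hbounded := inner_mem_boundedFun
    (boundedFun_of_forall_norm_eq fun _ ↦ rfl (a := ‖m.meanPoleOrbit π (ratioTranslate π e c ξ t)‖))
    ⟨‖ξ‖, fun s ↦ (m.norm_operatorMean_le (m.shiftOrbit π) (ratioTranslate π e c ξ s)).trans
      (norm_ratioTranslate π e c ξ s).le⟩
  refine Eq.trans (hN.congr ?_) (hN.mean_relParam ht hte hbounded)
  refine (eventually_ratio_relParam_ne_zero h).mono fun x h' ↦ Eq.symm ?_
  exact (hm.inner_meanPoleOrbit_act (inv_ne_zero h) (inv_ne_zero h') ξ ξ).trans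
    (by rw [inv_div_inv])

theorem mean_mean_inner_cotOrbit [CompleteSpace H] (he : e ≠ 0) (hc : c ≠ 0) (ξ : H) :
    (N fun t ↦ N fun s ↦ ⟪m.cotOrbit π e t (ratioTranslate π e c ξ t),
        m.cotOrbit π e s (ratioTranslate π e c ξ s)⟫_ℝ) =
      ⟪m.meanPoleOrbit π (N.ratioMean π e c ξ), m.meanShiftOrbit π (N.ratioMean π e c ξ)⟫_ℝ := by
  unfold ratioMean
  set B := ratioTranslate π e c ξ
  let b (t x : K) : H := act π (ratio e c t / ratio e c (relParam e t x)) ξ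
  have hb (t x : K) : ‖b t x‖ ≤ ‖ξ‖ := ((act π _).norm_map ξ).le
  have hBmem : B ∈ boundedFun K H := ratioTranslate_mem_boundedFun π e c ξ
  calc (N fun t ↦ N fun s ↦ ⟪m.cotOrbit π e t (B t), m.cotOrbit π e s (B s)⟫_ℝ)
    _ = N fun t ↦ N fun x ↦ ⟪m.poleOrbit π x ξ, m.shiftOrbit π (secondPole e t x) (b t x)⟫_ℝ :=
      hm.mean_mean_inner_cotOrbit_eq_poleOrbit hN hc ξ
    _ = N fun t ↦ N fun x ↦ ⟪m.poleOrbit π x ξ, m.meanShiftOrbit π (b t x)⟫_ℝ :=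
      hm.inner_shiftOrbit_eq_inner_meanShiftOrbit hN
        (boundedFun_of_forall_norm_eq fun x ↦ (m.poleOrbit π x).norm_map ξ)
        (fun _ ht _ _ hij ↦ eventually_secondPole_ne he ht hij) hb
    _ = N fun t ↦ N fun x ↦ ⟪m.meanPoleOrbit π ξ, m.meanShiftOrbit π (b t x)⟫_ℝ := by
      simp only [hm.inner_poleOrbit_meanShiftOrbit,
        hm.mean_inner_meanPoleOrbit_shiftOrbit hN ξ (hb _)]
    _ = N fun t ↦ N fun s ↦ ⟪m.meanPoleOrbit π (B t), m.meanShiftOrbit π (B s)⟫_ℝ :=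
      hN.congr ((eventually_ratio_ne_zero e hc).mono fun _ h ↦
        hm.mean_inner_meanPoleOrbit_relParam hN h ξ)
    _ = N fun t ↦ ⟪m.meanPoleOrbit π (B t), m.meanShiftOrbit π (N.vectorMean B)⟫_ℝ := by
      congr! 3 with t
      simp only [← real_inner_comm (m.meanPoleOrbit π (B t)), inner_apply_vectorMean hBmem]
    _ = ⟪m.meanPoleOrbit π (N.vectorMean B), m.meanShiftOrbit π (N.vectorMean B)⟫_ℝ :=
      (inner_apply_vectorMean hBmem _ _).symm

end Mean.IsAffineInvariant

end Correlation

section Recurrence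

variable {K H : Type*} [Field K] [NormedAddCommGroup H] [InnerProductSpace ℝ H]
  {π : Kˣ →* (H →ₗᵢ[ℝ] H)} {m N : Mean K} {e c : K}

lemma inner_act_of_invariant {o : H} (ho : ∀ u, π u o = o) (a : K) (x : H) :
    ⟪act π a x, o⟫_ℝ = ⟪x, o⟫_ℝ := by
  have hact : act π a o = o := by
    rw [act]
    split_ifs with ha
    exacts [rfl, ho _]
  rw [← (act π a).inner_map_map x o, hact]

namespace Mean

lemma inner_ratioMean_of_invariant [CompleteSpace H] {o : H} (ho : ∀ u, π u o = o) (e c : K)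
    (ξ : H) : ⟪m.ratioMean π e c ξ, o⟫_ℝ = ⟪ξ, o⟫_ℝ := by
  simp only [inner_ratioMean, ratioTranslate, inner_act_of_invariant ho, map_const]

variable (π m) in
/-- The average of the orbit of `x`, which is the projection of `x` to the invariant vectors. -/
noncomputable def orbitMean [CompleteSpace H] (x : H) : H :=
  m.vectorMean fun θ ↦ act π θ x

lemma inner_orbitMean [CompleteSpace H] (x y : H) :
    ⟪m.orbitMean π x, y⟫_ℝ = m fun θ ↦ ⟪act π θ x, y⟫_ℝ :=
  inner_vectorMean (boundedFun_of_forall_norm_eq fun θ ↦ (act π θ).norm_map x) y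

lemma inner_orbitMean_of_invariant [CompleteSpace H] {o : H} (ho : ∀ u, π u o = o) (x : H) :
    ⟪m.orbitMean π x, o⟫_ℝ = ⟪x, o⟫_ℝ := by
  simp only [inner_orbitMean, inner_act_of_invariant ho, map_const]

namespace IsAffineInvariant

variable [CharZero K] (hm : m.IsAffineInvariant)
include hm

lemma apply_orbitMean [CompleteSpace H] (u : Kˣ) (x : H) :
    π u (m.orbitMean π x) = m.orbitMean π x := by
  have hact : π u = act π (u : K) := by rw [act_of_ne_zero π u.ne_zero, Units.mk0_val]
  have hbounded (y : H) := inner_mem_boundedFun (X := K)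
    (boundedFun_of_forall_norm_eq fun θ ↦ (act π θ).norm_map x)
    (boundedFun_of_forall_norm_eq fun _ ↦ rfl (a := ‖y‖))
  refine ext_inner_right ℝ fun y ↦ ?_
  calc ⟪π u (m.orbitMean π x), y⟫_ℝ
    _ = m fun θ ↦ ⟪π u (act π θ x), y⟫_ℝ :=
      inner_apply_vectorMean (boundedFun_of_forall_norm_eq fun θ ↦ (act π θ).norm_map x)
        (π u).toContinuousLinearMap y
    _ = m fun θ ↦ ⟪act π (u * θ + 0) x, y⟫_ℝ := by
      refine hm.congr ((eventually_cofinite_ne 0).mono fun θ hθ ↦ ?_)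
      simp only [hact, add_zero, act_mul π u.ne_zero hθ]
    _ = ⟪m.orbitMean π x, y⟫_ℝ := (hm u 0 u.ne_zero _ (hbounded y)).trans (inner_orbitMean x y).symm

lemma orbit_div_sub_eq {x : H} (hx : ∀ u u', m.shiftOrbit π u x = m.shiftOrbit π u' x)
    {g : K → K} (hg : ∀ᶠ θ in cofinite, g θ ≠ 0) (p q : K) :
    m.orbit π (fun θ ↦ g θ / (θ - p)) x = m.orbit π (fun θ ↦ g θ / (θ - q)) x := by
  refine hm.orbit_eq_congr ?_ (hx q p)
  filter_upwards [hg, eventually_cofinite_ne p, eventually_cofinite_ne q] with θ h hp hq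
  replace hp := sub_ne_zero.2 hp
  replace hq := sub_ne_zero.2 hq
  exact ⟨hq, hp, div_ne_zero h hp, by field_simp⟩

lemma mean_cotAdd {t : K} (h : t ^ 2 + e ≠ 0) {f : K → ℝ} (hf : f ∈ boundedFun K ℝ) :
    (m fun θ ↦ f (cotAdd e t θ)) = m fun θ ↦ f (t + θ⁻¹) := by
  rw [← hm (-(t ^ 2 + e)) (-t) (neg_ne_zero.2 h) _ (boundedFun_comp hf (cotAdd e t))]
  refine hm.congr ((eventually_cofinite_ne 0).mono fun θ hθ ↦ ?_)
  simp only [← sub_eq_add_neg, cotAdd_neg_mul_sub h hθ]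

end IsAffineInvariant

namespace IsStationaryPair

variable [CharZero K] [CompleteSpace H] (h : IsStationaryPair m N)
include h

lemma mean_mean_inner_ratioTranslate_cotAdd (e c : K) (ξ y : H) :
    (N fun t ↦ m fun θ ↦ ⟪ratioTranslate π e c ξ (cotAdd e t θ), y⟫_ℝ) =
      ⟪N.ratioMean π e c ξ, y⟫_ℝ := by
  have hbounded := inner_mem_boundedFun (ratioTranslate_mem_boundedFun π e c ξ)
    (boundedFun_of_forall_norm_eq fun _ ↦ rfl (a := ‖y‖))
  rw [inner_ratioMean, ← h.stationary _ hbounded]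
  refine h.snd.congr ((eventually_quadratic_ne_zero one_ne_zero 0 e).mono fun t ht ↦ ?_)
  exact h.fst.mean_cotAdd (by simpa using ht) hbounded

lemma norm_ratioMean_le (he : e ≠ 0) (hc : c ≠ 0) (ξ : H) :
    ‖N.ratioMean π e c ξ‖ ≤ ‖m.meanShiftOrbit π (N.ratioMean π e c ξ)‖ := by
  set ζ := N.ratioMean π e c ξ with hζ
  let v (t : K) : L2 H m := m.cotOrbit π e t (ratioTranslate π e c ξ t)
  have hv : v ∈ boundedFun K (L2 H m) := boundedFun_of_forall_norm_eq fun t ↦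
    ((m.cotOrbit π e t).norm_map _).trans (norm_ratioTranslate π e c ξ t)
  have hnorm : ‖ζ‖ ^ 2 = ⟪N.vectorMean v, m.orbit π (fun θ ↦ θ ^ 2 + e) ζ⟫_ℝ := by
    rw [← real_inner_self_eq_norm_sq, hζ, ← h.mean_mean_inner_ratioTranslate_cotAdd, ← hζ,
      inner_vectorMean hv]
    exact h.snd.congr ((eventually_ratio_ne_zero e hc).mono fun t ht ↦
      h.fst.mean_inner_ratioTranslate_cotAdd ht ξ ζ)
  have hle : ‖ζ‖ ^ 2 ≤ ‖N.vectorMean v‖ * ‖ζ‖ := by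
    rw [hnorm, ← (m.orbit π fun θ ↦ θ ^ 2 + e).norm_map ζ]
    exact real_inner_le_norm _ _
  have hnormMean : ‖N.vectorMean v‖ ^ 2 = ⟪m.meanPoleOrbit π ζ, m.meanShiftOrbit π ζ⟫_ℝ := by
    rw [← h.fst.mean_mean_inner_cotOrbit h.snd he hc, ← real_inner_self_eq_norm_sq,
      inner_vectorMean hv]
    refine congrArg N (funext fun t ↦ ?_)
    rw [real_inner_comm, inner_vectorMean hv]
    simp only [v, real_inner_comm]
  have hleMean : ‖N.vectorMean v‖ ^ 2 ≤ ‖ζ‖ * ‖m.meanShiftOrbit π ζ‖ := by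
    rw [hnormMean]
    exact (real_inner_le_norm _ _).trans
      (mul_le_mul_of_nonneg_right (m.norm_operatorMean_le _ ζ) (norm_nonneg _))
  rcases (norm_nonneg ζ).eq_or_lt with hzero | hpos
  · exact hzero ▸ norm_nonneg _
  · have hζv : ‖ζ‖ ≤ ‖N.vectorMean v‖ := le_of_mul_le_mul_right (by rwa [← sq]) hpos
    refine le_of_mul_le_mul_left ?_ hpos
    calc ‖ζ‖ * ‖ζ‖ = ‖ζ‖ ^ 2 := (sq _).symm
      _ ≤ ‖N.vectorMean v‖ ^ 2 := pow_le_pow_left₀ hpos.le hζv 2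
      _ ≤ ‖ζ‖ * ‖m.meanShiftOrbit π ζ‖ := hleMean

variable (he : e ≠ 0) (hc : c ≠ 0) (ξ : H)
include he hc

lemma shiftOrbit_ratioMean_eq (u u' : K) :
    m.shiftOrbit π u (N.ratioMean π e c ξ) = m.shiftOrbit π u' (N.ratioMean π e c ξ) :=
  h.fst.shiftOrbit_eq_of_norm_le (h.norm_ratioMean_le he hc ξ) u u'

lemma mean_inner_ratioTranslate_cotAdd_ratioMean {t : K} (ht : ratio e c t ≠ 0) :
    (m fun θ ↦ ⟪ratioTranslate π e c ξ (cotAdd e t θ), N.ratioMean π e c ξ⟫_ℝ) =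
      ⟪m.orbit π (fun _ ↦ 1) (ratioTranslate π e c ξ t),
        m.orbit π (fun θ ↦ (θ ^ 2 + e) / θ ^ 2) (N.ratioMean π e c ξ)⟫_ℝ := by
  have hquad : ∀ᶠ θ in cofinite, θ ^ 2 + e ≠ 0 :=
    (eventually_quadratic_ne_zero one_ne_zero 0 e).mono fun θ hθ ↦ by simpa using hθ
  have hdiv (p : K) : ∀ᶠ θ in cofinite, (θ ^ 2 + e) / (θ - p) ≠ 0 :=
    (hquad.and (eventually_cofinite_ne p)).mono fun θ hθ ↦ div_ne_zero hθ.1 (sub_ne_zero.2 hθ.2)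
  have hconst := h.shiftOrbit_ratioMean_eq (π := π) he hc ξ
  have hpoles : m.orbit π (fun θ ↦ (θ ^ 2 + e) / ((θ + t) * (θ - e / t))) (N.ratioMean π e c ξ) =
      m.orbit π (fun θ ↦ (θ ^ 2 + e) / θ ^ 2) (N.ratioMean π e c ξ) := by
    have hfirst := h.fst.orbit_div_sub_eq hconst (hdiv (-t)) (e / t) 0
    have hsecond := h.fst.orbit_div_sub_eq hconst (hdiv 0) (-t) 0
    simp only [div_div, sub_neg_eq_add, sub_zero, ← sq] at hfirst hsecond
    simpa only [mul_comm, hfirst] using hsecond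
  rw [h.fst.mean_inner_ratioTranslate_cotAdd ht, ← hpoles]
  refine h.fst.inner_orbit_congr ?_ _ _
  filter_upwards [hquad, eventually_cofinite_ne (-t), eventually_cofinite_ne (e / t)]
    with θ h0 h1 h2
  refine ⟨mul_ne_zero (mt eq_neg_of_add_eq_zero_left h1) (sub_ne_zero.2 h2), h0, one_ne_zero, ?_⟩
  rw [div_one]

lemma orbit_ratioMean_eq :
    m.orbit π (fun θ ↦ (θ ^ 2 + e) / θ ^ 2) (N.ratioMean π e c ξ) =
      m.orbit π (fun _ ↦ 1) (N.ratioMean π e c ξ) := by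
  refine ((linearIsometry_apply_eq_iff _ _ _).2 (Eq.le ?_)).symm
  rw [← real_inner_self_eq_norm_sq, ← h.mean_mean_inner_ratioTranslate_cotAdd]
  refine (h.snd.congr ?_).trans
    (inner_apply_vectorMean (ratioTranslate_mem_boundedFun π e c ξ)
      (m.orbit π fun _ ↦ 1).toContinuousLinearMap _).symm
  exact (eventually_ratio_ne_zero e hc).mono fun t ht ↦
    h.mean_inner_ratioTranslate_cotAdd_ratioMean he hc ξ ht

lemma norm_ratioMean_sq :
    ‖N.ratioMean π e c ξ‖ ^ 2 = m fun t ↦ ⟪ratioTranslate π e c ξ t, N.ratioMean π e c ξ⟫_ℝ := by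
  have hbounded := inner_mem_boundedFun (ratioTranslate_mem_boundedFun π e c ξ)
    (boundedFun_of_forall_norm_eq fun _ ↦ rfl (a := ‖N.ratioMean π e c ξ‖))
  rw [← real_inner_self_eq_norm_sq, inner_ratioMean]
  refine h.eq_of_harmonic _ hbounded ((eventually_ratio_ne_zero e hc).mono fun t ht ↦ ?_)
  rw [← h.fst.mean_cotAdd (ratio_ne_zero_iff.1 ht).2.1 hbounded,
    h.mean_inner_ratioTranslate_cotAdd_ratioMean he hc ξ ht, h.orbit_ratioMean_eq he hc,
    LinearIsometry.inner_map_map]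

lemma mean_inner_ratioTranslate_ratioMean :
    (m fun t ↦ ⟪ratioTranslate π e c ξ t, N.ratioMean π e c ξ⟫_ℝ) =
      ⟪ξ, m.orbitMean π (N.ratioMean π e c ξ)⟫_ℝ := by
  set ζ := N.ratioMean π e c ξ
  have hratio : m.orbit π (ratio e c) ζ = m.orbit π (fun θ ↦ c * θ) ζ := by
    refine h.fst.orbit_eq_congr ?_ (h.orbit_ratioMean_eq he hc ξ)
    filter_upwards [eventually_ratio_ne_zero e hc] with θ hθ
    obtain ⟨-, hθe, hθ0⟩ := ratio_ne_zero_iff.1 hθ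
    refine ⟨div_ne_zero hθe (pow_ne_zero 2 hθ0), one_ne_zero, hθ, ?_⟩
    rw [ratio]
    field_simp
  have hdilate := h.fst.inner_orbit_comp (π := π) (fun _ ↦ 1) id ξ ζ hc 0
  simp only [id, add_zero] at hdilate
  calc (m fun t ↦ ⟪ratioTranslate π e c ξ t, ζ⟫_ℝ)
    _ = ⟪m.orbit π (fun _ ↦ 1) ξ, m.orbit π (ratio e c) ζ⟫_ℝ := by
      rw [inner_orbit]
      refine h.fst.congr ((eventually_ratio_ne_zero e hc).mono fun t ht ↦ ?_)
      have hinv : (1 : K) / (ratio e c t)⁻¹ = ratio e c t / 1 := by rw [one_div, inv_inv, div_one]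
      simpa only [act_one, ratioTranslate] using
        inner_act_act_congr π (inv_ne_zero ht) one_ne_zero one_ne_zero hinv ξ ζ
    _ = ⟪m.orbit π (fun _ ↦ 1) ξ, m.orbit π (fun θ ↦ θ) ζ⟫_ℝ := by rw [hratio, hdilate]; rfl
    _ = ⟪ξ, m.orbitMean π ζ⟫_ℝ := by
      rw [inner_orbit, real_inner_comm, inner_orbitMean]
      simp only [act_one, real_inner_comm]

lemma orbitMean_ratioMean : m.orbitMean π (N.ratioMean π e c ξ) = N.ratioMean π e c ξ := by
  set ζ := N.ratioMean π e c ξ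
  have hinv : ∀ u, π u (m.orbitMean π ζ) = m.orbitMean π ζ := fun u ↦ h.fst.apply_orbitMean u ζ
  have hζ : ⟪ζ, m.orbitMean π ζ⟫_ℝ = ‖ζ‖ ^ 2 := by
    rw [inner_ratioMean_of_invariant hinv, h.norm_ratioMean_sq he hc,
      h.mean_inner_ratioTranslate_ratioMean he hc]
  have horbit : ‖m.orbitMean π ζ‖ ^ 2 = ‖ζ‖ ^ 2 := by
    rw [← real_inner_self_eq_norm_sq, inner_orbitMean_of_invariant hinv, hζ]
  rw [eq_comm, ← sub_eq_zero, ← norm_eq_zero, ← sq_eq_zero_iff, norm_sub_sq_real, hζ, horbit]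
  ring

theorem inner_ratioMean_self : ⟪N.ratioMean π e c ξ, ξ⟫_ℝ = ‖N.ratioMean π e c ξ‖ ^ 2 := by
  rw [h.norm_ratioMean_sq he hc, h.mean_inner_ratioTranslate_ratioMean he hc,
    h.orbitMean_ratioMean he hc, real_inner_comm]

end IsStationaryPair

end Mean

theorem frequently_inner_ratioTranslate_pos [CharZero K] [CompleteSpace H] (he : e ≠ 0)
    (hc : c ≠ 0) {ξ o : H} (ho : ∀ u, π u o = o) (hξ : ⟪ξ, o⟫_ℝ ≠ 0) :
    ∃ᶠ t in cofinite, 0 < ⟪ratioTranslate π e c ξ t, ξ⟫_ℝ := by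
  obtain ⟨m, N, h⟩ := Mean.exists_isStationaryPair K
  have hne : N.ratioMean π e c ξ ≠ 0 := fun hzero ↦ hξ <| by
    rw [← Mean.inner_ratioMean_of_invariant ho e c ξ, hzero, inner_zero_left]
  by_contra hfreq
  have hle := h.snd.le_of_eventually_le
    (inner_mem_boundedFun (ratioTranslate_mem_boundedFun π e c ξ)
      (boundedFun_of_forall_norm_eq fun _ ↦ rfl (a := ‖ξ‖)))
    ((not_frequently.1 hfreq).mono fun t ↦ le_of_not_gt)
  rw [← Mean.inner_ratioMean, h.inner_ratioMean_self he hc] at hle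
  exact hne (by simpa using hle)

end Recurrence

section Koopman

/-- The extension of linear isometries of a seminormed space to its completion. -/
noncomputable def completionIsometry (V : Type*) [SeminormedAddCommGroup V] [NormedSpace ℝ V] :
    (V →ₗᵢ[ℝ] V) →* (UniformSpace.Completion V →ₗᵢ[ℝ] UniformSpace.Completion V) where
  toFun T :=
    { toLinearMap := T.toContinuousLinearMap.completion.toLinearMap
      norm_map' := T.isometry.completion_map.norm_map_of_map_zero
        (map_zero T.toContinuousLinearMap.completion) }
  map_one' := LinearIsometry.ext fun x ↦ congrFun UniformSpace.Completion.map_id x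
  map_mul' S T := LinearIsometry.ext fun x ↦ congrFun (UniformSpace.Completion.map_comp
    S.isometry.uniformContinuous T.isometry.uniformContinuous).symm x

lemma completionIsometry_coe {V : Type*} [SeminormedAddCommGroup V] [NormedSpace ℝ V]
    (T : V →ₗᵢ[ℝ] V) (x : V) :
    completionIsometry V T x = (T x : UniformSpace.Completion V) :=
  T.toContinuousLinearMap.completion_apply_coe x

namespace Mean

variable {X G E : Type*} [NormedAddCommGroup E] [InnerProductSpace ℝ E] [Group G] {m : Mean X}
  {φ : G →* Equiv.Perm X}

/-- The isometry `f ↦ f ∘ T` of `PreL2 E m`, for a transformation `T` that preserves `m`. -/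
noncomputable def compIsometry {T : X → X} (hT : m.IsInvariant T) : PreL2 E m →ₗᵢ[ℝ] PreL2 E m where
  toFun f := ⟨fun x ↦ f.1 (T x), boundedFun_comp f.2 T⟩
  map_add' _ _ := rfl
  map_smul' _ _ := rfl
  norm_map' f := congrArg Real.sqrt (hT _ (inner_mem_boundedFun f.2 f.2))

variable (E) in
/-- The Koopman representation, by left translations, of a measure-preserving action `φ`. -/
noncomputable def koopman (hφ : ∀ g, m.IsInvariant (φ g)) : G →* (L2 E m →ₗᵢ[ℝ] L2 E m) :=
  (completionIsometry (PreL2 E m)).comp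
    { toFun := fun g ↦ compIsometry (hφ g⁻¹)
      map_one' := LinearIsometry.ext fun f ↦ Subtype.ext <| funext fun x ↦
        congrArg f.1 (by simp)
      map_mul' := fun g h ↦ LinearIsometry.ext fun f ↦ Subtype.ext <| funext fun x ↦
        congrArg f.1 (by simp) }

lemma koopman_toL2 (hφ : ∀ g, m.IsInvariant (φ g)) (g : G) (f : boundedFun X E) :
    koopman E hφ g (m.toL2 f) = m.toL2 ⟨fun x ↦ f.1 (φ g⁻¹ x), boundedFun_comp f.2 _⟩ :=
  completionIsometry_coe (V := PreL2 E m) _ f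

theorem frequently_mean_comp_mul_pos {K : Type*} [Field K] [CharZero K] {φ : Kˣ →* Equiv.Perm X}
    (hφ : ∀ u, m.IsInvariant (φ u)) {e c : K} (he : e ≠ 0) (hc : c ≠ 0) {F : X → ℝ}
    (hF : F ∈ boundedFun X ℝ) (hmean : m F ≠ 0) :
    ∃ᶠ t in cofinite, ∃ u : Kˣ, (u : K) = ratio e c t ∧ 0 < m fun x ↦ F (φ u x) * F x := by
  let one : boundedFun X ℝ := ⟨fun _ ↦ 1, boundedFun_of_forall_norm_eq fun _ ↦ norm_one⟩
  have hone (u : Kˣ) : koopman ℝ hφ u (m.toL2 one) = m.toL2 one := koopman_toL2 hφ u one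
  have hinner : ⟪m.toL2 ⟨F, hF⟩, m.toL2 one⟫_ℝ = m F := by
    rw [inner_toL2]
    simp [one]
  refine ((frequently_inner_ratioTranslate_pos he hc hone
    (hinner.trans_ne hmean)).and_eventually (eventually_ratio_ne_zero e hc)).mono ?_
  rintro t ⟨hpos, ht⟩
  refine ⟨Units.mk0 _ ht, rfl, ?_⟩
  have hact : ratioTranslate (koopman ℝ hφ) e c (m.toL2 ⟨F, hF⟩) t =
      m.toL2 ⟨fun x ↦ F (φ (Units.mk0 _ ht) x), boundedFun_comp hF _⟩ := by
    have hinv : (Units.mk0 _ (inv_ne_zero ht))⁻¹ = Units.mk0 _ ht := Units.ext (inv_inv _)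
    simp only [ratioTranslate, act_of_ne_zero _ (inv_ne_zero ht), koopman_toL2, hinv]
  rw [hact, inner_toL2] at hpos
  simpa [mul_comm] using hpos

end Mean

end Koopman

section Dilation

/-- The action of the group of units by `x ↦ |u| * x`. -/
def absDilation (K : Type*) [Field K] [LinearOrder K] [IsStrictOrderedRing K] :
    Kˣ →* Equiv.Perm K :=
  (MulAction.toPermHom Kˣ K).comp (Units.map absHom.toMonoidHom)

lemma absDilation_apply {K : Type*} [Field K] [LinearOrder K] [IsStrictOrderedRing K] (u : Kˣ)
    (x : K) : absDilation K u x = |(u : K)| * x :=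
  rfl

namespace Mean

/-- `m` is invariant under multiplication by positive integers. -/
def IsDilationInvariant (m : Mean ℕ) : Prop :=
  ∀ k, 0 < k → m.IsInvariant (k * ·)

lemma indicator_one_mem_boundedFun {X : Type*} (s : Set X) :
    s.indicator (1 : X → ℝ) ∈ boundedFun X ℝ :=
  boundedFun_of_norm_le fun x ↦
    (norm_indicator_le_norm_self _ x).trans (norm_one (α := ℝ)).le

namespace IsDilationInvariant

variable {m : Mean ℕ} (hm : m.IsDilationInvariant)
include hm

lemma map_natCast {q : ℚ} (hq : 0 < q) : (m.map ((↑) : ℕ → ℚ)).IsInvariant (q * ·) := by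
  intro f hf
  have hnum : (q.num.toNat : ℚ) = q.num := mod_cast Int.toNat_of_nonneg (Rat.num_nonneg.2 hq.le)
  have hcancel (n : ℕ) : q * ↑(q.den * n) = ↑(q.num.toNat * n) := by
    rw [Nat.cast_mul, Nat.cast_mul, ← mul_assoc, Rat.mul_den_eq_num, hnum]
  simp only [map_apply]
  rw [← hm q.den q.den_pos _ (boundedFun_comp hf fun n : ℕ ↦ q * n)]
  simp only [hcancel]
  exact hm q.num.toNat (Int.pos_iff_toNat_pos.1 (Rat.num_pos.2 hq)) _
    (boundedFun_comp hf ((↑) : ℕ → ℚ))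

theorem frequently_mean_indicator_pos {e c : ℚ} (he : e ≠ 0) (hc : c ≠ 0) {Λ : Set ℕ}
    (hΛ : 0 < m (Λ.indicator 1)) :
    ∃ᶠ t in cofinite, ∀ p q : ℕ, 0 < q → |ratio e c t| = p / q →
      0 < m (({x | p * x ∈ Λ} ∩ {x | q * x ∈ Λ}).indicator 1) := by
  classical
  let F : ℚ → ℝ := (Set.image ((↑) : ℕ → ℚ) Λ).indicator 1
  have hF : F ∈ boundedFun ℚ ℝ := indicator_one_mem_boundedFun _
  have hcast (n : ℕ) : F n = Λ.indicator 1 n := by simp [F, Set.indicator_apply]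
  have hmean : m.map ((↑) : ℕ → ℚ) F = m (Λ.indicator 1) := by simp only [map_apply, hcast]
  refine (frequently_mean_comp_mul_pos (φ := absDilation ℚ)
    (fun u ↦ hm.map_natCast (abs_pos.2 u.ne_zero)) he hc hF (hmean ▸ hΛ.ne')).mono ?_
  rintro t ⟨u, hu, hpos⟩ p q hq hpq
  have hscale (n : ℕ) : |(u : ℚ)| * ↑(q * n) = ↑(p * n) := by
    have hq' : (q : ℚ) ≠ 0 := Nat.cast_ne_zero.2 hq.ne'
    rw [hu, hpq]
    push_cast
    field_simp
  have hF' : (fun n : ℕ ↦ F (|(u : ℚ)| * n) * F n) ∈ boundedFun ℕ ℝ :=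
    inner_mem_boundedFun (boundedFun_comp hF ((↑) : ℕ → ℚ))
      (boundedFun_comp hF fun n : ℕ ↦ |(u : ℚ)| * n)
  simp only [map_apply, absDilation_apply] at hpos
  rw [← hm q hq _ hF'] at hpos
  simp only [hscale, hcast] at hpos
  refine hpos.trans_eq (congrArg m (funext fun n ↦ ?_))
  by_cases hp : p * n ∈ Λ <;> by_cases hqn : q * n ∈ Λ <;> simp [hp, hqn]

end IsDilationInvariant

end Mean

end Dilation

section Folner

namespace Mean

variable {X : Type*} {s : Finset X}

lemma abs_average_dirac_comp_sub_le [DecidableEq X] (hs : s.Nonempty) {T : X → X}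
    (hT : Function.Injective T) {f : X → ℝ} {C : ℝ} (hf : ∀ x, |f x| ≤ C) :
    |average s hs dirac (fun x ↦ f (T x)) - average s hs dirac f| ≤
      2 * C * (1 - (s ∩ s.image T).card / s.card) := by
  have hcard : (0 : ℝ) < s.card := Nat.cast_pos.2 hs.card_pos
  have hsum (r : Finset X) : |∑ x ∈ r, f x| ≤ C * r.card :=
    (Finset.abs_sum_le_sum_abs _ _).trans <|
      (Finset.sum_le_card_nsmul _ _ _ fun x _ ↦ hf x).trans_eq <| by rw [nsmul_eq_mul, mul_comm]
  have himage : (s.image T).card = s.card := Finset.card_image_of_injective _ hT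
  have hright : ((s \ s.image T).card : ℝ) = s.card - (s ∩ s.image T).card :=
    eq_sub_of_add_eq (mod_cast Finset.card_sdiff_add_card_inter s (s.image T))
  have hleft : ((s.image T \ s).card : ℝ) = s.card - (s ∩ s.image T).card := by
    rw [Finset.card_sdiff_comm himage, hright]
  calc |average s hs dirac (fun x ↦ f (T x)) - average s hs dirac f|
      = (s.card : ℝ)⁻¹ * |∑ x ∈ s.image T \ s, f x - ∑ x ∈ s \ s.image T, f x| := by
        rw [average_apply, average_apply, ← mul_sub, abs_mul, abs_of_pos (inv_pos.2 hcard),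
          Finset.sum_sdiff_sub_sum_sdiff, Finset.sum_image hT.injOn]
        rfl
    _ ≤ (s.card : ℝ)⁻¹ * (C * (s.image T \ s).card + C * (s \ s.image T).card) := by
        gcongr
        exact (abs_sub _ _).trans (add_le_add (hsum _) (hsum _))
    _ = 2 * C * (1 - (s ∩ s.image T).card / s.card) := by
        rw [hleft, hright]
        field_simp
        ring

open Classical in
lemma average_dirac_indicator (hs : s.Nonempty) (A : Set X) :
    average s hs dirac (A.indicator 1) = ((s.filter (· ∈ A)).card : ℝ) / s.card := by
  rw [average_apply, ← inv_mul_eq_div, ← Finset.sum_boole]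
  refine congrArg _ (Finset.sum_congr rfl fun x _ ↦ Set.indicator_apply A 1 x)

end Mean

variable {Φ : ℕ → Finset ℕ} (hΦ : IsMulFolner Φ)
include hΦ

lemma IsMulFolner.isDilationInvariant_of_le_atTop {u : Ultrafilter ℕ}
    (hu : (u : Filter ℕ) ≤ atTop) :
    (Mean.ultralimit u fun K ↦ Mean.average (Φ K) (hΦ.1 K) Mean.dirac).IsDilationInvariant := by
  intro k hk f hf
  obtain ⟨C, hC⟩ := hf
  have hbound : Tendsto (fun K ↦ 2 * C * (1 - ((Φ K ∩ (Φ K).image (k * ·)).card : ℝ) /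
      (Φ K).card)) u (𝓝 0) := by
    simpa using (((hΦ.2.2 k hk).mono_left hu).const_sub 1).const_mul (2 * C)
  exact sub_eq_zero.1 <| tendsto_nhds_unique
    ((Mean.tendsto_ultralimit u _ (boundedFun_comp ⟨C, hC⟩ _)).sub
      (Mean.tendsto_ultralimit u _ ⟨C, hC⟩))
    (squeeze_zero_norm (fun K ↦ Mean.abs_average_dirac_comp_sub_le (hΦ.1 K)
      (mul_right_injective₀ hk.ne') hC) hbound)

/-- A form of the Furstenberg correspondence principle. -/
theorem IsMulFolner.exists_mean_eq_upMulDens (Λ : Set ℕ) :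
    ∃ m : Mean ℕ, m.IsDilationInvariant ∧ m (Λ.indicator 1) = upMulDens Φ Λ ∧
      ∀ A : Set ℕ, m (A.indicator 1) ≤ upMulDens Φ A := by
  classical
  have hle (A : Set ℕ) : IsBoundedUnder (· ≤ ·) atTop fun K ↦
      (((Φ K).filter (· ∈ A)).card : ℝ) / (Φ K).card := isBoundedUnder_of ⟨1, fun K ↦
    div_le_one_of_le₀ (mod_cast Finset.card_filter_le _ _) (Nat.cast_nonneg _)⟩
  have hge (A : Set ℕ) : IsBoundedUnder (· ≥ ·) atTop fun K ↦
      (((Φ K).filter (· ∈ A)).card : ℝ) / (Φ K).card := isBoundedUnder_of ⟨0, fun K ↦ by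
    positivity⟩
  obtain ⟨u, hu, htendsto⟩ := mapClusterPt_iff_ultrafilter.1
    (MapClusterPt.limsup (hge Λ).isCoboundedUnder_le (hle Λ))
  let M (K : ℕ) : Mean ℕ := Mean.average (Φ K) (hΦ.1 K) Mean.dirac
  have hlim (A : Set ℕ) : Tendsto (fun K ↦ (((Φ K).filter (· ∈ A)).card : ℝ) / (Φ K).card) u
      (𝓝 (Mean.ultralimit u M (A.indicator 1))) := by
    simpa only [M, Mean.average_dirac_indicator] using
      Mean.tendsto_ultralimit u M (Mean.indicator_one_mem_boundedFun A)
  exact ⟨Mean.ultralimit u M, hΦ.isDilationInvariant_of_le_atTop hu,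
    tendsto_nhds_unique (hlim Λ) htendsto, fun A ↦
    (mapClusterPt_iff_ultrafilter.2 ⟨u, hu, hlim A⟩).le_limsup (hle A)⟩

end Folner

lemma abs_ratio_eq_natAbs_div {a : ℤ} (ha : a ≠ 0) (b : ℤ) {k : ℕ} (hk : 0 < k) {t : ℚ}
    (ht : t ≠ 0) :
    |ratio (b / a : ℚ) (a / k) t| =
      ((a * t.num.natAbs ^ 2 + b * t.den ^ 2).natAbs : ℚ) / (k * (t.num.natAbs * t.den) : ℕ) := by
  have ha' : (a : ℚ) ≠ 0 := Int.cast_ne_zero.2 ha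
  have hk' : (0 : ℚ) < k := Nat.cast_pos.2 hk
  have hden : (0 : ℚ) < t.den := Nat.cast_pos.2 t.den_pos
  have hnum : (t.num : ℚ) ≠ 0 := Int.cast_ne_zero.2 (Rat.num_ne_zero.2 ht)
  have hratio : ratio (b / a : ℚ) (a / k) t =
      (a * t.num ^ 2 + b * t.den ^ 2) / (k * (t.num * t.den)) := by
    nth_rw 1 [← Rat.num_div_den t]
    rw [ratio]
    field_simp
  rw [hratio, abs_div, abs_mul, abs_mul, abs_of_pos hk', abs_of_pos hden]
  push_cast [Nat.cast_natAbs, sq_abs]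
  rfl

theorem pythagorean_pairs_density_parametric_general {Φ : ℕ → Finset ℕ} (hΦ : IsMulFolner Φ)
    {Λ : Set ℕ} (hdens : 0 < upMulDens Φ Λ) {a b : ℤ} (ha : a ≠ 0) (hb : b ≠ 0) {k : ℕ}
    (hk : 0 < k) :
    ∃ m n : ℕ, 0 < m ∧ 0 < n ∧ a * m ^ 2 + b * n ^ 2 ≠ 0 ∧
      (a * m ^ 2 + b * n ^ 2).natAbs ≠ k * (m * n) ∧
      0 < upMulDens Φ ({x | (a * m ^ 2 + b * n ^ 2).natAbs * x ∈ Λ} ∩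
        {x | k * (m * n) * x ∈ Λ}) := by
  obtain ⟨μ, hμ, hμΛ, hμle⟩ := hΦ.exists_mean_eq_upMulDens Λ
  have he : (b / a : ℚ) ≠ 0 := div_ne_zero (Int.cast_ne_zero.2 hb) (Int.cast_ne_zero.2 ha)
  have hc : (a / k : ℚ) ≠ 0 := div_ne_zero (Int.cast_ne_zero.2 ha) (Nat.cast_ne_zero.2 hk.ne')
  obtain ⟨t, hpos, ht, h0, h1, hneg⟩ :=
    ((hμ.frequently_mean_indicator_pos he hc (hμΛ ▸ hdens)).and_eventually <|
      (eventually_cofinite_ne 0).and <| (eventually_ratio_ne_zero _ hc).and <|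
      (eventually_ratio_ne _ hc 1).and <| eventually_ratio_ne _ hc (-1)).exists
  have hm : 0 < t.num.natAbs := Int.natAbs_pos.2 (Rat.num_ne_zero.2 ht)
  have hkmn : 0 < k * (t.num.natAbs * t.den) := mul_pos hk (mul_pos hm t.den_pos)
  have habs := abs_ratio_eq_natAbs_div ha b hk ht
  refine ⟨t.num.natAbs, t.den, hm, t.den_pos, fun h ↦ h0 ?_, fun h ↦ ?_,
    (hpos _ _ hkmn habs).trans_le (hμle _)⟩
  · rwa [h, Int.natAbs_zero, Nat.cast_zero, zero_div, abs_eq_zero] at habs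
  · rw [h, div_self (Nat.cast_ne_zero.2 hkmn.ne')] at habs
    exact (eq_or_eq_neg_of_abs_eq habs).elim h1 hneg

lemma natAbs_mul_sq_add_neg_mul_sq (ℓ : ℕ) {m n : ℕ} (h : n ≤ m) :
    ((ℓ : ℤ) * m ^ 2 + -ℓ * n ^ 2).natAbs = ℓ * (m ^ 2 - n ^ 2) := by
  have hsq : n ^ 2 ≤ m ^ 2 := Nat.pow_le_pow_left h 2
  have hcast : (ℓ : ℤ) * m ^ 2 + -ℓ * n ^ 2 = ↑(ℓ * (m ^ 2 - n ^ 2)) := by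
    push_cast [hsq]
    ring
  rw [hcast, Int.natAbs_natCast]

/-- **Theorem 1.6 (parametric form of density regularity of Pythagorean pairs).**
If `Λ` has positive upper multiplicative density with respect to `Φ`, then for all
`ℓ, ℓ' ∈ ℕ`: (1) there are `m > n` with `ℓ(m² − n²) ≠ ℓ' m n` and
`d̄_Φ((ℓ(m² − n²))⁻¹Λ ∩ (ℓ' m n)⁻¹Λ) > 0`; (2) there are `m, n` with
`ℓ(m² + n²) ≠ ℓ' m n` and `d̄_Φ((ℓ(m² + n²))⁻¹Λ ∩ (ℓ' m n)⁻¹Λ) > 0`. -/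
theorem pythagorean_pairs_density_parametric
    (Λ : Set ℕ) (hΛpos : ∀ n ∈ Λ, 0 < n)
    (Φ : ℕ → Finset ℕ) (hΦ : IsMulFolner Φ) (hdens : 0 < upMulDens Φ Λ)
    (ℓ ℓ' : ℕ) (hℓ : 0 < ℓ) (hℓ' : 0 < ℓ') :
    (∃ m n : ℕ, 0 < n ∧ n < m ∧ ℓ * (m ^ 2 - n ^ 2) ≠ ℓ' * (m * n) ∧
      0 < upMulDens Φ ({x : ℕ | ℓ * (m ^ 2 - n ^ 2) * x ∈ Λ} ∩
        {x : ℕ | ℓ' * (m * n) * x ∈ Λ})) ∧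
    (∃ m n : ℕ, 0 < m ∧ 0 < n ∧ ℓ * (m ^ 2 + n ^ 2) ≠ ℓ' * (m * n) ∧
      0 < upMulDens Φ ({x : ℕ | ℓ * (m ^ 2 + n ^ 2) * x ∈ Λ} ∩
        {x : ℕ | ℓ' * (m * n) * x ∈ Λ})) := by
  have hℓz : (ℓ : ℤ) ≠ 0 := Int.natCast_ne_zero.2 hℓ.ne'
  have hadd (m n : ℕ) : ((ℓ : ℤ) * m ^ 2 + ℓ * n ^ 2).natAbs = ℓ * (m ^ 2 + n ^ 2) := by
    rw [mul_add]
    exact Int.natAbs_natCast (ℓ * m ^ 2 + ℓ * n ^ 2)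
  constructor
  · obtain ⟨m, n, hm, hn, h0, hne, hpos⟩ :=
      pythagorean_pairs_density_parametric_general hΦ hdens hℓz (neg_ne_zero.2 hℓz) hℓ'
    rcases lt_trichotomy n m with h | rfl | h
    · exact ⟨m, n, hn, h, natAbs_mul_sq_add_neg_mul_sq ℓ h.le ▸ hne,
        natAbs_mul_sq_add_neg_mul_sq ℓ h.le ▸ hpos⟩
    · exact absurd (by ring) h0
    · have hswap : ((ℓ : ℤ) * m ^ 2 + -ℓ * n ^ 2).natAbs = ℓ * (n ^ 2 - m ^ 2) := by
        rw [← natAbs_mul_sq_add_neg_mul_sq ℓ h.le, ← Int.natAbs_neg]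
        ring_nf
      rw [hswap, mul_comm m n] at hne hpos
      exact ⟨n, m, hm, h, hne, hpos⟩
  · obtain ⟨m, n, hm, hn, -, hne, hpos⟩ :=
      pythagorean_pairs_density_parametric_general hΦ hdens hℓz hℓz hℓ'
    exact ⟨m, n, hm, hn, hadd m n ▸ hne, hadd m n ▸ hpos⟩
end

section
/- Suppose Λ ⊆ ℕ satisfies d̄_Φ(Λ) > 0 for some multiplicative Følner sequence Φ. Then liminf_{N→∞} (1/(log N)²) ∑_{m,n=1}^{N} (1/(mn)) · d̄_Φ( (n² + n)⁻¹Λ ∩ (m²)⁻¹Λ ) > 0. -/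
open Filter

/-!
Choose an ultrafilter along which the averages of `1_Λ` over `Φ` converge to the upper density of
`Λ`. It yields a dilation-invariant mean `M` with `δ := M(1_Λ) > 0` and `M(1_S) ≤ d̄_Φ(S)` for every
`S`, so it suffices to bound the averages of `M(1_Λ((n² + n)x) 1_Λ(m²x))` from below.

In the convex hull of the square dilations `x ↦ 1_Λ(r²x)` take `w` of nearly minimal `L²` norm. The
parallelogram law makes `w` almost invariant under dilation by squares, and `M(w) = δ`. Dilating by
`dn` and using this invariance gives, for all positive `d`, `n`, `k`,
`M(w(d(n+1)x) w(dnx)) ≲ M(1_Λ((n² + n)x) w(k²x))`, while `w` is dominated by finitely many square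
dilations of `1_Λ`.

By Cauchy–Schwarz, among sufficiently many dilations of `w` some two have correlation at least
`δ²/2`. Apply this to the translates `S + Pt` of a finite set `S` in which all differences `a - b`
divide `b` and `P`. The two dilations are then by `d(n+1)` and `dn` with `d = a - b`. As `t` varies,
the resulting `n` grow linearly and repeat boundedly often, so they have positive lower
logarithmic density; pigeonholing over the dilations dominating `w` does the same for `m`.
-/

open scoped BoundedContinuousFunction BigOperators

section NonnegativeSquares

variable {A : Type*} [CommRing A] [Algebra ℝ A] {M : A →ₗ[ℝ] ℝ}

lemma sq_map_mul_le (hM : ∀ u, 0 ≤ M (u ^ 2)) (u v : A) :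
    M (u * v) ^ 2 ≤ M (u ^ 2) * M (v ^ 2) := by
  let B : LinearMap.BilinForm ℝ A := (LinearMap.mul ℝ A).compr₂ M
  have hB (u v : A) : B u v = M (u * v) := rfl
  have hsymm : LinearMap.IsSymm B := LinearMap.isSymm_def.2 fun u v => by simp [hB, mul_comm]
  simpa only [hB, ← sq] using B.apply_sq_le_of_symm (fun u => by simpa only [hB, ← sq] using hM u)
    hsymm u v

lemma map_mul_le_map_mul_add (hM : ∀ u, 0 ≤ M (u ^ 2)) {u v v' : A} {τ : ℝ} (hτ : 0 ≤ τ)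
    (hu : M (u ^ 2) ≤ 1) (hv : M ((v - v') ^ 2) ≤ τ ^ 2) :
    M (u * v) ≤ M (u * v') + τ := by
  have hsq : M (u * (v - v')) ^ 2 ≤ τ ^ 2 :=
    calc M (u * (v - v')) ^ 2 ≤ M (u ^ 2) * M ((v - v') ^ 2) := sq_map_mul_le hM _ _
      _ ≤ 1 * τ ^ 2 := mul_le_mul hu hv (hM _) zero_le_one
      _ = τ ^ 2 := one_mul _
  have hle := (abs_le_of_sq_le_sq' hsq hτ).2
  rw [mul_sub, map_sub] at hle
  linarith

lemma map_sub_sq_eq (M : A →ₗ[ℝ] ℝ) (u v : A) :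
    M ((u - v) ^ 2) =
      2 * M (u ^ 2) + 2 * M (v ^ 2) - 4 * M (((1 / 2 : ℝ) • u + (1 / 2 : ℝ) • v) ^ 2) := by
  have hmid : (4 : ℝ) • ((1 / 2 : ℝ) • u + (1 / 2 : ℝ) • v) ^ 2 = (u + v) ^ 2 := by
    rw [← smul_add, smul_pow, smul_smul]
    norm_num
  have hpar : (u - v) ^ 2 = (2 : ℝ) • u ^ 2 + (2 : ℝ) • v ^ 2 - (u + v) ^ 2 := by
    simp only [ofNat_smul_eq_nsmul, nsmul_eq_mul, Nat.cast_ofNat]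
    ring
  rw [hpar, ← hmid]
  simp only [map_add, map_sub, map_smul, smul_eq_mul]

lemma exists_mem_forall_map_sub_sq_le (hM : ∀ u, 0 ≤ M (u ^ 2)) {C : Set A} (hC : Convex ℝ C)
    (hne : C.Nonempty) {η : ℝ} (hη : 0 < η) :
    ∃ w ∈ C, ∀ u ∈ C, ∀ v ∈ C, M (u ^ 2) ≤ M (w ^ 2) → M (v ^ 2) ≤ M (w ^ 2) →
      M ((u - v) ^ 2) ≤ η := by
  let E : Set ℝ := (fun w => M (w ^ 2)) '' C
  have hbdd : BddBelow E := ⟨0, Set.forall_mem_image.2 fun w _ => hM w⟩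
  obtain ⟨_, ⟨w, hw, rfl⟩, hlt⟩ :=
    exists_lt_of_csInf_lt (hne.image _) (show sInf E < sInf E + η / 4 by linarith)
  refine ⟨w, hw, fun u hu v hv huw hvw => ?_⟩
  have hmid : sInf E ≤ M (((1 / 2 : ℝ) • u + (1 / 2 : ℝ) • v) ^ 2) :=
    csInf_le hbdd ⟨_, hC hu hv (by norm_num) (by norm_num) (by norm_num), rfl⟩
  rw [map_sub_sq_eq]
  linarith

lemma exists_ne_le_map_mul (hM : ∀ u, 0 ≤ M (u ^ 2)) (hM1 : M 1 = 1) {ι : Type*} {S : Finset ι}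
    {u : ι → A} (hu : ∀ i ∈ S, M (u i ^ 2) ≤ 1) {δ : ℝ} (hδ : 0 ≤ δ) (hδu : ∀ i ∈ S, δ ≤ M (u i))
    (hS : 2 < S.card * δ ^ 2) :
    ∃ i ∈ S, ∃ j ∈ S, i ≠ j ∧ δ ^ 2 / 2 ≤ M (u i * u j) := by
  classical
  by_contra! hsmall
  have hentry : ∀ i ∈ S, ∀ j ∈ S, M (u i * u j) ≤ (if i = j then 1 else 0) + δ ^ 2 / 2 := by
    intro i hi j hj
    split_ifs with hij
    · subst hij
      rw [← sq]
      linarith [hu i hi, sq_nonneg δ]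
    · linarith [hsmall i hi j hj hij]
  have hupper : M ((∑ i ∈ S, u i) ^ 2) ≤ S.card + S.card ^ 2 * (δ ^ 2 / 2) :=
    calc M ((∑ i ∈ S, u i) ^ 2) = ∑ i ∈ S, ∑ j ∈ S, M (u i * u j) := by
          simp only [sq, Finset.sum_mul_sum, map_sum]
      _ ≤ ∑ i ∈ S, ∑ j ∈ S, ((if i = j then 1 else 0) + δ ^ 2 / 2) :=
          Finset.sum_le_sum fun i hi => Finset.sum_le_sum fun j hj => hentry i hi j hj
      _ = S.card + S.card ^ 2 * (δ ^ 2 / 2) := by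
          simp only [Finset.sum_add_distrib, Finset.sum_ite_eq, Finset.sum_ite_mem,
            Finset.inter_self, Finset.sum_const, nsmul_eq_mul]
          ring
  have hlower : (S.card * δ) ^ 2 ≤ M ((∑ i ∈ S, u i) ^ 2) :=
    calc (S.card * δ) ^ 2 ≤ M (∑ i ∈ S, u i) ^ 2 := by
          have := Finset.card_nsmul_le_sum S (fun i => M (u i)) δ hδu
          rw [nsmul_eq_mul, ← map_sum] at this
          gcongr
      _ ≤ M ((∑ i ∈ S, u i) ^ 2) := by
          simpa only [mul_one, one_pow, hM1] using sq_map_mul_le hM (∑ i ∈ S, u i) 1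
  have hcard : (0 : ℝ) < S.card := pos_of_mul_pos_left (two_pos.trans hS) (sq_nonneg δ)
  linarith [mul_lt_mul_of_pos_left hS hcard]

end NonnegativeSquares

section Differences

lemma exists_finset_sub_dvd (K : ℕ) : ∃ (S : Finset ℕ) (P : ℕ), 0 < P ∧ S.card = K ∧
    ∀ a ∈ S, ∀ b ∈ S, b < a → a - b ∣ b ∧ a - b ∣ P := by
  induction K with
  | zero => exact ⟨∅, 1, one_pos, rfl, by simp⟩
  | succ K ih =>
    obtain ⟨S, P, hP, hcard, hdvd⟩ := ih
    let S' := S.map (addLeftEmbedding P)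
    have hmem {a : ℕ} (ha : a ∈ S') : ∃ s ∈ S, P + s = a := by simpa [S'] using ha
    have hzero : 0 ∉ S' := fun h => by
      obtain ⟨s, -, hs⟩ := hmem h
      omega
    refine ⟨insert 0 S', P * ∏ a ∈ S', a, ?_, ?_, ?_⟩
    · exact Nat.mul_pos hP (Finset.prod_pos fun a ha =>
        Nat.pos_of_ne_zero fun h => hzero (h ▸ ha))
    · rw [Finset.card_insert_of_notMem hzero, Finset.card_map, hcard]
    intro a ha b hb hab
    obtain rfl | haS := Finset.mem_insert.1 ha
    · exact absurd hab (Nat.not_lt_zero b)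
    obtain rfl | hbS := Finset.mem_insert.1 hb
    · exact ⟨dvd_zero _, (Finset.dvd_prod_of_mem _ haS).mul_left P⟩
    obtain ⟨s, hs, rfl⟩ := hmem haS
    obtain ⟨r, hr, rfl⟩ := hmem hbS
    obtain ⟨hsr, hsrP⟩ := hdvd s hs r hr (by omega)
    rw [Nat.add_sub_add_left]
    exact ⟨dvd_add hsrP hsr, hsrP.mul_right _⟩

/-- On the positive integers `g` is positive, grows at most linearly with slope `C`, and takes each
value at most `q` times; its values then have positive lower logarithmic density. -/
structure IsLinearFiniteToOne (g : ℕ → ℕ) (C q : ℕ) : Prop where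
  pos : ∀ t, 0 < t → 0 < g t
  le_mul : ∀ t, 0 < t → g t ≤ C * t
  card_fiber_le : ∀ T n, ((Finset.Icc 1 T).filter (g · = n)).card ≤ q

lemma IsLinearFiniteToOne.of_sub_mul_eq {S : Finset ℕ} {P : ℕ} (hP : 0 < P) {g a b : ℕ → ℕ}
    (ha : ∀ t, 0 < t → a t ∈ S) (hb : ∀ t, 0 < t → b t ∈ S)
    (hg : ∀ t, 0 < t → (a t - b t) * g t = b t + P * t) :
    IsLinearFiniteToOne g (S.sup id + P) (S ×ˢ S).card where
  pos t ht := by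
    have hprod : 0 < (a t - b t) * g t := by rw [hg t ht]; positivity
    exact pos_of_mul_pos_right hprod (Nat.zero_le _)
  le_mul t ht := by
    have hprod : 0 < (a t - b t) * g t := by rw [hg t ht]; positivity
    have hsub : 0 < a t - b t := pos_of_mul_pos_left hprod (Nat.zero_le _)
    calc g t ≤ (a t - b t) * g t := Nat.le_mul_of_pos_left _ hsub
      _ = b t + P * t := hg t ht
      _ ≤ S.sup id * t + P * t := by
        gcongr
        exact (Finset.le_sup (f := id) (hb t ht)).trans (Nat.le_mul_of_pos_right _ ht)
      _ = (S.sup id + P) * t := (add_mul _ _ _).symm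
  card_fiber_le T n := by
    refine Finset.card_le_card_of_injOn (fun t => (a t, b t)) ?_ ?_
    · intro t ht
      have ht : 0 < t := (Finset.mem_Icc.1 (Finset.mem_filter.1 ht).1).1
      exact Finset.mem_product.2 ⟨ha t ht, hb t ht⟩
    · intro s hs t ht hst
      obtain ⟨hs, hsn⟩ := Finset.mem_filter.1 hs
      obtain ⟨ht, htn⟩ := Finset.mem_filter.1 ht
      obtain ⟨hast, hbst⟩ := Prod.mk.inj hst
      have heq := hg s (Finset.mem_Icc.1 hs).1
      rw [hast, hbst, hsn, ← htn, hg t (Finset.mem_Icc.1 ht).1] at heq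
      exact (Nat.eq_of_mul_eq_mul_left hP (Nat.add_left_cancel heq)).symm

end Differences

section InvariantMeans

instance {X : Type*} [TopologicalSpace X] :
    PosSMulMono ℝ (X →ᵇ ℝ) :=
  ⟨fun _ hc _ _ huv x => mul_le_mul_of_nonneg_left (huv x) hc⟩

/-- The dilation `x ↦ u (a * x)` of `u`, which on indicator functions is `S ↦ a⁻¹S`. -/
def dilate (a : ℕ) : (ℕ →ᵇ ℝ) →ₐ[ℝ] (ℕ →ᵇ ℝ) where
  toFun u := u.compContinuous ⟨(a * ·), continuous_of_discreteTopology⟩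
  map_one' := rfl
  map_mul' _ _ := rfl
  map_zero' := rfl
  map_add' _ _ := rfl
  commutes' _ := rfl

variable {u f w : ℕ →ᵇ ℝ} {k : ℕ}

@[simp]
lemma dilate_apply (a : ℕ) (u : ℕ →ᵇ ℝ) (x : ℕ) : dilate a u x = u (a * x) := rfl

lemma dilate_dilate (a b : ℕ) (u : ℕ →ᵇ ℝ) : dilate a (dilate b u) = dilate (b * a) u := by
  ext x
  simp only [dilate_apply, mul_assoc]

lemma dilate_mono (a : ℕ) : Monotone (dilate a) := fun _ _ huv x => huv (a * x)

lemma dilate_mem_Icc (a : ℕ) (hu : u ∈ Set.Icc 0 1) : dilate a u ∈ Set.Icc 0 1 :=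
  ⟨fun x => hu.1 (a * x), fun x => hu.2 (a * x)⟩

/-- A dilation-invariant mean on the bounded functions `ℕ → ℝ`; since `ℕ` is discrete, these are the
elements of `ℕ →ᵇ ℝ`. -/
structure IsInvariantMean (M : (ℕ →ᵇ ℝ) →ₗ[ℝ] ℝ) : Prop where
  map_one : M 1 = 1
  map_nonneg : ∀ u, 0 ≤ u → 0 ≤ M u
  map_dilate : ∀ a, 0 < a → ∀ u, M (dilate a u) = M u

namespace IsInvariantMean

variable {M : (ℕ →ᵇ ℝ) →ₗ[ℝ] ℝ} (hM : IsInvariantMean M)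
include hM

lemma monotone : Monotone M := fun u v huv => by
  have := hM.map_nonneg (v - u) (sub_nonneg.2 huv)
  rwa [map_sub, sub_nonneg] at this

lemma map_sq_nonneg (u : ℕ →ᵇ ℝ) : 0 ≤ M (u ^ 2) :=
  hM.map_nonneg _ fun x => sq_nonneg (u x)

lemma map_sq_le_one (hu : u ∈ Set.Icc 0 1) : M (u ^ 2) ≤ 1 :=
  hM.map_one ▸ hM.monotone fun x => pow_le_one₀ (hu.1 x) (hu.2 x)

lemma map_dilate_mul_dilate {c : ℕ} (hc : 0 < c) (a b : ℕ) (u v : ℕ →ᵇ ℝ) :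
    M (dilate (a * c) u * dilate (b * c) v) = M (dilate a u * dilate b v) := by
  rw [← dilate_dilate c a, ← dilate_dilate c b, ← map_mul (dilate c), hM.map_dilate c hc]

end IsInvariantMean

/-- The convex hull of the dilations of `f` by positive squares. -/
def squareDilationHull (f : ℕ →ᵇ ℝ) : Set (ℕ →ᵇ ℝ) :=
  convexHull ℝ {w | ∃ r : ℕ, 0 < r ∧ dilate (r ^ 2) f = w}

lemma squareDilationHull_subset {P : Set (ℕ →ᵇ ℝ)} (hP : Convex ℝ P)
    (hf : ∀ r, 0 < r → dilate (r ^ 2) f ∈ P) : squareDilationHull f ⊆ P :=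
  convexHull_min (by rintro _ ⟨r, hr, rfl⟩; exact hf r hr) hP

lemma dilate_sq_mem_squareDilationHull (hk : 0 < k) : dilate (k ^ 2) f ∈ squareDilationHull f :=
  subset_convexHull ℝ _ ⟨k, hk, rfl⟩

lemma dilate_mem_squareDilationHull (hk : 0 < k) (hw : w ∈ squareDilationHull f) :
    dilate (k ^ 2) w ∈ squareDilationHull f :=
  squareDilationHull_subset ((convex_convexHull ℝ _).linear_preimage (dilate (k ^ 2)).toLinearMap)
    (fun r hr => by
      rw [Set.mem_preimage, AlgHom.toLinearMap_apply, dilate_dilate, ← mul_pow]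
      exact dilate_sq_mem_squareDilationHull (Nat.mul_pos hr hk)) hw

lemma squareDilationHull_subset_Icc (hf : f ∈ Set.Icc 0 1) :
    squareDilationHull f ⊆ Set.Icc 0 1 :=
  squareDilationHull_subset (convex_Icc 0 1) fun _ _ => dilate_mem_Icc _ hf

lemma exists_le_sum_of_mem_squareDilationHull (hf : 0 ≤ f) (hw : w ∈ squareDilationHull f) :
    ∃ R, w ≤ ∑ r ∈ Finset.Icc 1 R, dilate (r ^ 2) f := by
  have hmono : Monotone fun R => ∑ r ∈ Finset.Icc 1 R, dilate (r ^ 2) f := fun R R' h =>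
    Finset.sum_le_sum_of_subset_of_nonneg (Finset.Icc_subset_Icc_right h)
      fun r _ _ x => hf (r ^ 2 * x)
  refine squareDilationHull_subset
    (P := {w | ∃ R, w ≤ ∑ r ∈ Finset.Icc 1 R, dilate (r ^ 2) f}) ?_ ?_ hw
  · rintro u ⟨R, hu⟩ v ⟨R', hv⟩ s t hs ht hst
    exact ⟨max R R', convex_Iic _ (hu.trans (hmono (le_max_left R R')))
      (hv.trans (hmono (le_max_right R R'))) hs ht hst⟩
  · intro r hr
    exact ⟨r, Finset.single_le_sum (f := fun r => dilate (r ^ 2) f) (fun r _ x => hf (r ^ 2 * x))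
      (Finset.mem_Icc.2 ⟨hr, le_rfl⟩)⟩

namespace IsInvariantMean

variable {M : (ℕ →ᵇ ℝ) →ₗ[ℝ] ℝ} (hM : IsInvariantMean M)
include hM

lemma map_eq_of_mem_squareDilationHull (hw : w ∈ squareDilationHull f) : M w = M f :=
  squareDilationHull_subset (P := {w | M w = M f}) (convex_hyperplane M.isLinear _)
    (fun r hr => hM.map_dilate _ (by positivity) f) hw

lemma exists_mem_squareDilationHull_almost_invariant (f : ℕ →ᵇ ℝ) {η : ℝ} (hη : 0 < η) :
    ∃ w ∈ squareDilationHull f, ∀ j k, 0 < j → 0 < k →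
      M ((dilate (j ^ 2) w - dilate (k ^ 2) w) ^ 2) ≤ η := by
  obtain ⟨w, hw, hclose⟩ := exists_mem_forall_map_sub_sq_le hM.map_sq_nonneg
    (C := squareDilationHull f) (convex_convexHull ℝ _)
    ⟨_, dilate_sq_mem_squareDilationHull one_pos⟩ hη
  have hnorm {k : ℕ} (hk : 0 < k) : M (dilate (k ^ 2) w ^ 2) ≤ M (w ^ 2) := by
    rw [← map_pow, hM.map_dilate _ (by positivity)]
  exact ⟨w, hw, fun j k hj hk => hclose _ (dilate_mem_squareDilationHull hj hw) _
    (dilate_mem_squareDilationHull hk hw) (hnorm hj) (hnorm hk)⟩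

-- Dilation by `d * n` turns both factors into dilations of `w` by square multiples: `d ^ 2` times
-- `n ^ 2 + n`, and `(d * n) ^ 2`. Almost invariance then permits replacing the second square by
-- the multiple of `k ^ 2` that cancels the squares coming from the first factor.
lemma map_dilate_mul_dilate_le (hf : f ∈ Set.Icc 0 1) (hw : w ∈ squareDilationHull f) {τ : ℝ}
    (hτ : 0 ≤ τ) (hinv : ∀ j k, 0 < j → 0 < k →
      M ((dilate (j ^ 2) w - dilate (k ^ 2) w) ^ 2) ≤ τ ^ 2)
    {d n k : ℕ} (hd : 0 < d) (hn : 0 < n) (hk : 0 < k) :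
    M (dilate (d * (n + 1)) w * dilate (d * n) w) ≤
      M (dilate (n ^ 2 + n) f * dilate (k ^ 2) w) + τ := by
  let φ : (ℕ →ᵇ ℝ) →ₗ[ℝ] ℝ := M ∘ₗ LinearMap.mulRight ℝ (dilate ((d * n) ^ 2) w) ∘ₗ
    (dilate (d ^ 2 * (n ^ 2 + n))).toLinearMap
  have hφ (v : ℕ →ᵇ ℝ) :
      φ v = M (dilate (d ^ 2 * (n ^ 2 + n)) v * dilate ((d * n) ^ 2) w) := rfl
  have hscale : M (dilate (d * (n + 1)) w * dilate (d * n) w) = φ w := by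
    rw [hφ, ← hM.map_dilate_mul_dilate (mul_pos hd hn)]
    congr 4 <;> ring
  rw [hscale]
  refine squareDilationHull_subset
    (P := {v | φ v ≤ M (dilate (n ^ 2 + n) f * dilate (k ^ 2) w) + τ})
    (convex_halfSpace_le φ.isLinear _) (fun r hr => ?_) hw
  calc φ (dilate (r ^ 2) f)
      = M (dilate (r ^ 2 * (d ^ 2 * (n ^ 2 + n))) f * dilate ((d * n) ^ 2) w) := by
        rw [hφ, dilate_dilate]
    _ ≤ M (dilate (r ^ 2 * (d ^ 2 * (n ^ 2 + n))) f * dilate ((d * r * k) ^ 2) w) + τ :=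
        map_mul_le_map_mul_add hM.map_sq_nonneg hτ (hM.map_sq_le_one (dilate_mem_Icc _ hf))
          (hinv _ _ (by positivity) (by positivity))
    _ = M (dilate (n ^ 2 + n) f * dilate (k ^ 2) w) + τ := by
        rw [← hM.map_dilate_mul_dilate (pow_pos (mul_pos hd hr) 2) (n ^ 2 + n)]
        congr 5 <;> ring

lemma exists_map_dilate_mul_dilate_le_sum (hf : f ∈ Set.Icc 0 1) {τ : ℝ} (hτ : 0 < τ) :
    ∃ w ∈ Set.Icc 0 1, M w = M f ∧ ∃ R, ∀ d n k, 0 < d → 0 < n → 0 < k →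
      M (dilate (d * (n + 1)) w * dilate (d * n) w) ≤
        ∑ r ∈ Finset.Icc 1 R, M (dilate (n ^ 2 + n) f * dilate ((r * k) ^ 2) f) + τ := by
  obtain ⟨w, hw, hinv⟩ := hM.exists_mem_squareDilationHull_almost_invariant f (pow_pos hτ 2)
  obtain ⟨R, hR⟩ := exists_le_sum_of_mem_squareDilationHull hf.1 hw
  refine ⟨w, squareDilationHull_subset_Icc hf hw, hM.map_eq_of_mem_squareDilationHull hw, R,
    fun d n k hd hn hk => ?_⟩
  have hle : dilate (n ^ 2 + n) f * dilate (k ^ 2) w ≤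
      ∑ r ∈ Finset.Icc 1 R, dilate (n ^ 2 + n) f * dilate ((r * k) ^ 2) f :=
    calc dilate (n ^ 2 + n) f * dilate (k ^ 2) w
        ≤ dilate (n ^ 2 + n) f * dilate (k ^ 2) (∑ r ∈ Finset.Icc 1 R, dilate (r ^ 2) f) :=
          fun x => mul_le_mul_of_nonneg_left (dilate_mono _ hR x) (hf.1 _)
      _ = ∑ r ∈ Finset.Icc 1 R, dilate (n ^ 2 + n) f * dilate ((r * k) ^ 2) f := by
        simp only [map_sum, dilate_dilate, Finset.mul_sum, mul_pow]
  calc M (dilate (d * (n + 1)) w * dilate (d * n) w)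
      ≤ M (dilate (n ^ 2 + n) f * dilate (k ^ 2) w) + τ :=
        hM.map_dilate_mul_dilate_le hf hw hτ.le hinv hd hn hk
    _ ≤ ∑ r ∈ Finset.Icc 1 R, M (dilate (n ^ 2 + n) f * dilate ((r * k) ^ 2) f) + τ := by
        rw [← map_sum]
        exact add_le_add_left (hM.monotone hle) τ

-- For `a - b` dividing `b` and `P`, the numbers `b + P * t` and `a + P * t` are consecutive
-- multiples of `a - b`.
lemma exists_pair_le_map_dilate_mul_dilate (hw : w ∈ Set.Icc 0 1) (hpos : 0 < M w)
    {S : Finset ℕ} {P : ℕ} (hP : 0 < P) (hS : 2 < S.card * M w ^ 2)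
    (hdvd : ∀ a ∈ S, ∀ b ∈ S, b < a → a - b ∣ b ∧ a - b ∣ P) {t : ℕ} (ht : 0 < t) :
    ∃ a ∈ S, ∃ b ∈ S, b < a ∧ ∃ n, (a - b) * n = b + P * t ∧
      M w ^ 2 / 2 ≤ M (dilate ((a - b) * (n + 1)) w * dilate ((a - b) * n) w) := by
  obtain ⟨a, ha, b, hb, hab, hle⟩ := exists_ne_le_map_mul hM.map_sq_nonneg hM.map_one
    (u := fun s => dilate (s + P * t) w) (fun s _ => hM.map_sq_le_one (dilate_mem_Icc _ hw))
    hpos.le (fun s _ => (hM.map_dilate _ (by positivity) w).ge) hS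
  wlog hlt : b < a generalizing a b
  · exact this b hb a ha hab.symm (by rwa [mul_comm]) (by omega)
  obtain ⟨hdb, hdP⟩ := hdvd a ha b hb hlt
  obtain ⟨n, hn⟩ := dvd_add hdb (hdP.mul_right t)
  refine ⟨a, ha, b, hb, hlt, n, hn.symm, ?_⟩
  have hsucc : (a - b) * (n + 1) = a + P * t := by
    rw [mul_add_one, ← hn]
    omega
  rwa [hsucc, ← hn]

lemma exists_isLinearFiniteToOne_le_map_dilate_mul_dilate (hw : w ∈ Set.Icc 0 1)
    (hpos : 0 < M w) :
    ∃ g C q, IsLinearFiniteToOne g C q ∧ ∀ t, 0 < t → ∃ d, 0 < d ∧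
      M w ^ 2 / 2 ≤ M (dilate (d * (g t + 1)) w * dilate (d * g t) w) := by
  obtain ⟨K, hK⟩ := exists_nat_gt (2 / M w ^ 2)
  obtain ⟨S, P, hP, rfl, hdvd⟩ := exists_finset_sub_dvd K
  have hS : 2 < S.card * M w ^ 2 := (div_lt_iff₀ (pow_pos hpos 2)).1 hK
  choose! a ha b hb hab g hg hle using fun t (ht : 0 < t) =>
    hM.exists_pair_le_map_dilate_mul_dilate hw hpos hP hS hdvd ht
  exact ⟨g, _, _, .of_sub_mul_eq hP ha hb hg, fun t ht =>
    ⟨a t - b t, Nat.sub_pos_of_lt (hab t ht), hle t ht⟩⟩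

end IsInvariantMean

end InvariantMeans

section LogarithmicAverages

lemma harmonic_cast_eq_sum (N : ℕ) : (harmonic N : ℝ) = ∑ n ∈ Finset.Icc 1 N, 1 / (n : ℝ) := by
  simp only [harmonic_eq_sum_Icc, Rat.cast_sum, Rat.cast_inv, Rat.cast_natCast, one_div]

lemma eventually_log_le_two_mul_harmonic_div {C : ℕ} (hC : 0 < C) :
    ∀ᶠ N : ℕ in atTop, Real.log N ≤ 2 * harmonic (N / C) := by
  have hlog : Tendsto (fun N : ℕ => Real.log N) atTop atTop :=
    Real.tendsto_log_atTop.comp tendsto_natCast_atTop_atTop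
  filter_upwards [hlog.eventually_ge_atTop (2 * Real.log C), eventually_gt_atTop 0] with N hN hpos
  have hfloor := log_le_harmonic_floor ((N : ℝ) / C) (by positivity)
  rw [Nat.floor_div_eq_div, Real.log_div (by positivity) (by positivity)] at hfloor
  linarith

namespace IsLinearFiniteToOne

variable {g : ℕ → ℕ} {C q : ℕ} (hg : IsLinearFiniteToOne g C q)
include hg

lemma slope_pos : 0 < C := by
  simpa only [mul_one] using (hg.pos 1 one_pos).trans_le (hg.le_mul 1 one_pos)

lemma multiplicity_pos : 0 < q :=
  (Finset.card_pos.2 ⟨1, by simp⟩).trans_le (hg.card_fiber_le 1 (g 1))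

lemma sum_comp_le {F : ℕ → ℝ} (hF : ∀ n, 0 ≤ F n) (N : ℕ) :
    ∑ t ∈ Finset.Icc 1 (N / C), F (g t) ≤ q * ∑ n ∈ Finset.Icc 1 N, F n := by
  have hmaps : ∀ t ∈ Finset.Icc 1 (N / C), g t ∈ Finset.Icc 1 N := by
    intro t ht
    obtain ⟨ht, htN⟩ := Finset.mem_Icc.1 ht
    exact Finset.mem_Icc.2 ⟨hg.pos t ht,
      (hg.le_mul t ht).trans ((Nat.mul_le_mul_left C htN).trans (Nat.mul_div_le N C))⟩
  rw [← Finset.sum_fiberwise_of_maps_to' hmaps, Finset.mul_sum]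
  refine Finset.sum_le_sum fun n _ => ?_
  rw [Finset.sum_const, nsmul_eq_mul]
  exact mul_le_mul_of_nonneg_right (mod_cast hg.card_fiber_le (N / C) n) (hF n)

lemma mul_log_le {D : ℕ → ℝ} (hD : ∀ n, 0 ≤ D n) {c : ℝ} (hc : 0 ≤ c)
    (hcD : ∀ t, 0 < t → c ≤ D (g t)) {N : ℕ} (hN : Real.log N ≤ 2 * harmonic (N / C)) :
    c * Real.log N ≤ 2 * C * q * ∑ n ∈ Finset.Icc 1 N, D n / n := by
  have hterm : ∀ t ∈ Finset.Icc 1 (N / C), c * (1 / t) ≤ C * (D (g t) / g t) := by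
    intro t ht
    have ht : 0 < t := (Finset.mem_Icc.1 ht).1
    have hgt : (0 : ℝ) < g t := mod_cast hg.pos t ht
    have hle : (g t : ℝ) ≤ C * t := mod_cast hg.le_mul t ht
    rw [mul_one_div, mul_div_assoc', div_le_div_iff₀ (mod_cast ht) hgt]
    calc c * g t ≤ D (g t) * (C * t) := mul_le_mul (hcD t ht) hle hgt.le (hD _)
      _ = C * D (g t) * t := by ring
  calc c * Real.log N ≤ c * (2 * harmonic (N / C)) := by gcongr
    _ = 2 * ∑ t ∈ Finset.Icc 1 (N / C), c * (1 / (t : ℝ)) := by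
        rw [harmonic_cast_eq_sum, ← Finset.mul_sum]
        ring
    _ ≤ 2 * ∑ t ∈ Finset.Icc 1 (N / C), C * (D (g t) / g t) := by
        gcongr 2 * ?_
        exact Finset.sum_le_sum hterm
    _ ≤ 2 * (C * (q * ∑ n ∈ Finset.Icc 1 N, D n / n)) := by
        rw [← Finset.mul_sum]
        gcongr
        exact hg.sum_comp_le (F := fun n => D n / n) (fun n => div_nonneg (hD n) n.cast_nonneg) N
    _ = 2 * C * q * ∑ n ∈ Finset.Icc 1 N, D n / n := by ring

end IsLinearFiniteToOne

lemma exists_isLinearFiniteToOne_div_le {D : ℕ → ℝ} {R : ℕ} {c : ℝ} (hR : 0 < R)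
    (hD : ∀ k, 0 < k → c ≤ ∑ r ∈ Finset.Icc 1 R, D (r * k)) :
    ∃ ρ, IsLinearFiniteToOne ρ R R ∧ ∀ k, 0 < k → c / R ≤ D (ρ k) := by
  have hexists : ∀ k, 0 < k → ∃ r ∈ Finset.Icc 1 R, c / R ≤ D (r * k) := fun k hk => by
    refine Finset.exists_le_of_sum_le ⟨1, Finset.mem_Icc.2 ⟨le_rfl, hR⟩⟩ ?_
    rw [Finset.sum_const, Nat.card_Icc, Nat.add_sub_cancel, nsmul_eq_mul,
      mul_div_cancel₀ c (by positivity)]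
    exact hD k hk
  choose! r hr hcr using hexists
  refine ⟨fun k => r k * k, ⟨fun k hk => ?_, fun k hk => ?_, fun T n => ?_⟩, hcr⟩
  · exact Nat.mul_pos (Finset.mem_Icc.1 (hr k hk)).1 hk
  · exact Nat.mul_le_mul_right k (Finset.mem_Icc.1 (hr k hk)).2
  · have hfiber {k : ℕ} (hk : k ∈ (Finset.Icc 1 T).filter (fun k => r k * k = n)) :
        r k ∈ Finset.Icc 1 R ∧ r k * k = n :=
      ⟨hr k (Finset.mem_Icc.1 (Finset.mem_filter.1 hk).1).1, (Finset.mem_filter.1 hk).2⟩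
    refine (Finset.card_le_card_of_injOn r (t := Finset.Icc 1 R) (fun k hk => (hfiber hk).1)
      fun j hj k hk hjk => ?_).trans_eq (Nat.card_Icc 1 R)
    have heq : r k * j = r k * k := by rw [(hfiber hk).2, ← (hfiber hj).2, hjk]
    exact Nat.eq_of_mul_eq_mul_left (Finset.mem_Icc.1 (hfiber hk).1).1 heq

/-- The double logarithmic average of `D` over `1 ≤ m, n ≤ N`. -/
noncomputable def logAverage (D : ℕ → ℕ → ℝ) (N : ℕ) : ℝ :=
  (1 / (Real.log N) ^ 2) * ∑ m ∈ Finset.Icc 1 N, ∑ n ∈ Finset.Icc 1 N,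
    (1 / ((m : ℝ) * (n : ℝ))) * D m n

lemma logAverage_mono {D D' : ℕ → ℕ → ℝ} (h : ∀ m n, D m n ≤ D' m n) (N : ℕ) :
    logAverage D N ≤ logAverage D' N := by
  unfold logAverage
  gcongr
  exact h _ _

lemma eventually_logAverage_le {D : ℕ → ℕ → ℝ} (hD : ∀ m n, D m n ≤ 1) :
    ∀ᶠ N in atTop, logAverage D N ≤ 4 := by
  have hlog : Tendsto (fun N : ℕ => Real.log N) atTop atTop :=
    Real.tendsto_log_atTop.comp tendsto_natCast_atTop_atTop
  filter_upwards [hlog.eventually_ge_atTop 1] with N hN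
  have hharm : (harmonic N : ℝ) ≤ 2 * Real.log N := by linarith [harmonic_le_one_add_log N]
  have hnonneg : (0 : ℝ) ≤ harmonic N := by
    rw [harmonic_cast_eq_sum]
    positivity
  calc logAverage D N ≤ logAverage (fun _ _ => 1) N := logAverage_mono hD N
    _ = 1 / Real.log N ^ 2 * (harmonic N : ℝ) ^ 2 := by
        simp only [logAverage, harmonic_cast_eq_sum, sq, Finset.sum_mul_sum, mul_one,
          one_div_mul_one_div]
    _ ≤ 1 / Real.log N ^ 2 * (2 * Real.log N) ^ 2 := by gcongr
    _ = 4 := by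
        field_simp
        norm_num

lemma exists_eventually_le_logAverage_of_le_sum {D : ℕ → ℕ → ℝ} (hD : ∀ m n, 0 ≤ D m n) {g : ℕ → ℕ}
    {C q R : ℕ} (hg : IsLinearFiniteToOne g C q) {c : ℝ} (hc : 0 < c)
    (hcD : ∀ t k, 0 < t → 0 < k → c ≤ ∑ r ∈ Finset.Icc 1 R, D (r * k) (g t)) :
    ∃ κ, 0 < κ ∧ ∀ᶠ N in atTop, κ ≤ logAverage D N := by
  have hC := hg.slope_pos
  have hq := hg.multiplicity_pos
  have hR : 0 < R := Nat.pos_of_ne_zero fun h => by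
    simpa [h, hc.not_ge] using hcD 1 1 one_pos one_pos
  refine ⟨c / (4 * R ^ 3 * C * q), by positivity, ?_⟩
  filter_upwards [eventually_log_le_two_mul_harmonic_div hC,
    eventually_log_le_two_mul_harmonic_div hR, eventually_gt_atTop 1] with N hNC hNR hN
  have hlog : 0 < Real.log N := Real.log_pos (mod_cast hN)
  let E (n : ℕ) : ℝ := ∑ m ∈ Finset.Icc 1 N, D m n / m
  have hE (n : ℕ) : 0 ≤ E n :=
    Finset.sum_nonneg fun m _ => div_nonneg (hD m n) m.cast_nonneg
  have hinner : ∀ t, 0 < t → c / R * Real.log N / (2 * R * R) ≤ E (g t) := by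
    intro t ht
    obtain ⟨ρ, hρ, hcρ⟩ :=
      exists_isLinearFiniteToOne_div_le (D := fun m => D m (g t)) hR (hcD t · ht)
    rw [div_le_iff₀' (by positivity)]
    exact hρ.mul_log_le (fun m => hD m (g t)) (by positivity) hcρ hNR
  have houter := hg.mul_log_le hE (by positivity) hinner hNC
  have hsum : ∑ m ∈ Finset.Icc 1 N, ∑ n ∈ Finset.Icc 1 N, (1 / ((m : ℝ) * n)) * D m n =
      ∑ n ∈ Finset.Icc 1 N, E n / n := by
    rw [Finset.sum_comm]
    refine Finset.sum_congr rfl fun n _ => ?_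
    rw [Finset.sum_div]
    exact Finset.sum_congr rfl fun m _ => by rw [div_div, one_div_mul_eq_div]
  calc c / (4 * R ^ 3 * C * q)
      = c / R * Real.log N / (2 * R * R) * Real.log N / (2 * C * q * Real.log N ^ 2) := by
        field_simp
        norm_num
    _ ≤ 2 * C * q * (∑ n ∈ Finset.Icc 1 N, E n / n) / (2 * C * q * Real.log N ^ 2) := by gcongr
    _ = logAverage D N := by
        rw [logAverage, hsum]
        field_simp

end LogarithmicAverages

section FolnerMeans

lemma exists_linearMap_tendsto {ι E : Type*} [AddCommGroup E] [Module ℝ E] (U : Ultrafilter ι)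
    (L : ι → E →ₗ[ℝ] ℝ) (hL : ∀ u, ∃ B, ∀ i, ‖L i u‖ ≤ B) :
    ∃ M : E →ₗ[ℝ] ℝ, ∀ u, Tendsto (fun i => L i u) U (nhds (M u)) := by
  have hlim (u : E) : ∃ l, Tendsto (fun i => L i u) U (nhds l) := by
    obtain ⟨B, hB⟩ := hL u
    obtain ⟨l, -, hl⟩ := (isCompact_closedBall (0 : ℝ) B).ultrafilter_le_nhds
      (U.map fun i => L i u)
      (le_principal_iff.2 (mem_map.2 (univ_mem' fun i => mem_closedBall_zero_iff.2 (hB i))))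
    exact ⟨l, hl⟩
  choose M hM using hlim
  exact ⟨linearMapOfTendsto M L (tendsto_pi_nhds.2 hM), hM⟩

/-- The average over a finite set, as a linear functional on bounded functions. -/
noncomputable def finsetMean {X : Type*} [TopologicalSpace X] (s : Finset X) :
    (X →ᵇ ℝ) →ₗ[ℝ] ℝ where
  toFun u := 𝔼 x ∈ s, u x
  map_add' u v := Finset.expect_add_distrib s u v
  map_smul' c u := (Finset.smul_expect c s u).symm

lemma finsetMean_apply {X : Type*} [TopologicalSpace X] (s : Finset X) (u : X →ᵇ ℝ) :
    finsetMean s u = (∑ x ∈ s, u x) / s.card :=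
  Finset.expect_eq_sum_div_card s u

lemma norm_finsetMean_le {X : Type*} [TopologicalSpace X] {s : Finset X} (hs : s.Nonempty)
    (u : X →ᵇ ℝ) : ‖finsetMean s u‖ ≤ ‖u‖ :=
  calc ‖finsetMean s u‖ ≤ 𝔼 x ∈ s, |u x| := Finset.abs_expect_le s u
    _ ≤ 𝔼 _x ∈ s, ‖u‖ := Finset.expect_le_expect fun x _ => u.norm_coe_le_norm x
    _ = ‖u‖ := Finset.expect_const hs _

lemma abs_sum_comp_sub_sum_le {X : Type*} [DecidableEq X] (s : Finset X) {φ : X → X}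
    (hφ : φ.Injective) {u : X → ℝ} {B : ℝ} (hu : ∀ x, |u x| ≤ B) :
    |∑ x ∈ s, u (φ x) - ∑ x ∈ s, u x| ≤ 2 * B * (s.card - (s ∩ s.image φ).card) := by
  have habs (t : Finset X) : |∑ x ∈ t, u x| ≤ t.card * B :=
    (Finset.abs_sum_le_sum_abs u t).trans
      ((Finset.sum_le_card_nsmul t _ B fun x _ => hu x).trans_eq (nsmul_eq_mul _ _))
  have hcard : (s.image φ).card = s.card := Finset.card_image_of_injective s hφ
  have hright : ((s.image φ \ s).card : ℝ) = s.card - (s ∩ s.image φ).card := by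
    rw [← hcard, Finset.inter_comm]
    exact eq_sub_of_add_eq (mod_cast Finset.card_sdiff_add_card_inter _ _)
  have hleft : ((s \ s.image φ).card : ℝ) = s.card - (s ∩ s.image φ).card :=
    eq_sub_of_add_eq (mod_cast Finset.card_sdiff_add_card_inter _ _)
  rw [← Finset.sum_image hφ.injOn, ← Finset.sum_sdiff_sub_sum_sdiff]
  calc _ ≤ ((s.image φ \ s).card : ℝ) * B + (s \ s.image φ).card * B :=
        (abs_sub _ _).trans (add_le_add (habs _) (habs _))
    _ = 2 * B * (s.card - (s ∩ s.image φ).card) := by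
        rw [hright, hleft]
        ring

variable {Φ : ℕ → Finset ℕ}

lemma IsMulFolner.tendsto_finsetMean_dilate_sub (hΦ : IsMulFolner Φ) {a : ℕ} (ha : 0 < a)
    (u : ℕ →ᵇ ℝ) :
    Tendsto (fun K => finsetMean (Φ K) (dilate a u) - finsetMean (Φ K) u) atTop (nhds 0) := by
  have hzero : Tendsto (fun K => 2 * ‖u‖ *
      (1 - ((Φ K ∩ (Φ K).image (a * ·)).card : ℝ) / (Φ K).card)) atTop (nhds 0) := by
    simpa only [sub_self, mul_zero] using ((hΦ.2.2 a ha).const_sub 1).const_mul (2 * ‖u‖)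
  refine squeeze_zero_norm (fun K => ?_) hzero
  have hcard : (0 : ℝ) < (Φ K).card := mod_cast (hΦ.1 K).card_pos
  have hle := abs_sum_comp_sub_sum_le (Φ K) (mul_right_injective₀ ha.ne') u.norm_coe_le_norm
  rw [finsetMean_apply, finsetMean_apply, ← sub_div, Real.norm_eq_abs, abs_div,
    abs_of_pos hcard, div_le_iff₀ hcard, mul_assoc, sub_mul, div_mul_cancel₀ _ hcard.ne', one_mul]
  exact hle

/-- The indicator function of `S`, as an element of the algebra on which invariant means act. -/
noncomputable def setIndicator (S : Set ℕ) : ℕ →ᵇ ℝ :=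
  BoundedContinuousFunction.indicator S (isClopen_discrete S)

lemma setIndicator_mem_Icc (S : Set ℕ) : setIndicator S ∈ Set.Icc 0 1 :=
  ⟨fun x => Set.indicator_nonneg (fun _ _ => zero_le_one) x,
    fun x => Set.indicator_le_self' (fun _ _ => zero_le_one) x⟩

lemma dilate_setIndicator (a : ℕ) (S : Set ℕ) :
    dilate a (setIndicator S) = setIndicator {x | a * x ∈ S} := rfl

lemma setIndicator_mul_setIndicator (S T : Set ℕ) :
    setIndicator S * setIndicator T = setIndicator (S ∩ T) := by
  ext x
  exact (congrFun (Set.inter_indicator_one (s := S) (t := T)) x).symm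

lemma upMulDens_eq_limsup_finsetMean (Φ : ℕ → Finset ℕ) (S : Set ℕ) :
    upMulDens Φ S = limsup (fun K => finsetMean (Φ K) (setIndicator S)) atTop := by
  classical
  refine congrArg (limsup · atTop) (funext fun K => ?_)
  rw [finsetMean_apply]
  congr 1
  simp [setIndicator, Set.indicator_apply]

variable (hΦ : IsMulFolner Φ)
include hΦ

lemma IsMulFolner.isBoundedUnder_finsetMean (u : ℕ →ᵇ ℝ) :
    IsBoundedUnder (· ≤ ·) atTop fun K => finsetMean (Φ K) u :=
  isBoundedUnder_of ⟨‖u‖, fun K => (abs_le.1 (norm_finsetMean_le (hΦ.1 K) u)).2⟩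

lemma IsMulFolner.isCoboundedUnder_finsetMean (u : ℕ →ᵇ ℝ) :
    IsCoboundedUnder (· ≤ ·) atTop fun K => finsetMean (Φ K) u :=
  IsBoundedUnder.isCoboundedUnder_le
    (isBoundedUnder_of ⟨-‖u‖, fun K => (abs_le.1 (norm_finsetMean_le (hΦ.1 K) u)).1⟩)

lemma IsMulFolner.exists_isInvariantMean_tendsto {U : Ultrafilter ℕ} (hU : (U : Filter ℕ) ≤ atTop) :
    ∃ M, IsInvariantMean M ∧
      ∀ u, Tendsto (fun K => finsetMean (Φ K) u) U (nhds (M u)) := by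
  obtain ⟨M, hM⟩ := exists_linearMap_tendsto U (fun K => finsetMean (Φ K))
    fun u => ⟨‖u‖, fun K => norm_finsetMean_le (hΦ.1 K) u⟩
  refine ⟨M, ⟨?_, fun u hu => ?_, fun a ha u => ?_⟩, hM⟩
  · exact tendsto_nhds_unique (hM 1)
      (tendsto_const_nhds.congr fun K => (Finset.expect_const (hΦ.1 K) 1).symm)
  · exact ge_of_tendsto' (hM u) fun K => Finset.expect_nonneg fun x _ => hu x
  · exact sub_eq_zero.1 (tendsto_nhds_unique ((hM _).sub (hM u))
      ((hΦ.tendsto_finsetMean_dilate_sub ha u).mono_left hU))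

lemma IsMulFolner.exists_isInvariantMean_eq_upMulDens (Λ : Set ℕ) :
    ∃ M, IsInvariantMean M ∧ M (setIndicator Λ) = upMulDens Φ Λ ∧
      ∀ S, M (setIndicator S) ≤ upMulDens Φ S := by
  simp only [upMulDens_eq_limsup_finsetMean]
  obtain ⟨U, hU, hlim⟩ := mapClusterPt_iff_ultrafilter.1
    (MapClusterPt.limsup (hΦ.isCoboundedUnder_finsetMean (setIndicator Λ))
      (hΦ.isBoundedUnder_finsetMean _))
  obtain ⟨M, hM, htendsto⟩ := hΦ.exists_isInvariantMean_tendsto hU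
  exact ⟨M, hM, tendsto_nhds_unique (htendsto _) hlim, fun S =>
    (mapClusterPt_iff_ultrafilter.2 ⟨U, hU, htendsto _⟩).le_limsup
      (hΦ.isBoundedUnder_finsetMean _)⟩

lemma IsMulFolner.upMulDens_le_one (S : Set ℕ) : upMulDens Φ S ≤ 1 := by
  rw [upMulDens_eq_limsup_finsetMean]
  refine limsup_le_of_le (hΦ.isCoboundedUnder_finsetMean _) (Eventually.of_forall fun K => ?_)
  calc finsetMean (Φ K) (setIndicator S) ≤ 𝔼 _x ∈ Φ K, 1 :=
        Finset.expect_le_expect fun x _ => (setIndicator_mem_Icc S).2 x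
    _ = 1 := Finset.expect_const (hΦ.1 K) 1

end FolnerMeans

lemma IsInvariantMean.exists_eventually_le_logAverage {M : (ℕ →ᵇ ℝ) →ₗ[ℝ] ℝ}
    (hM : IsInvariantMean M) {f : ℕ →ᵇ ℝ} (hf : f ∈ Set.Icc 0 1) (hpos : 0 < M f) :
    ∃ κ, 0 < κ ∧ ∀ᶠ N in atTop,
      κ ≤ logAverage (fun m n => M (dilate (n ^ 2 + n) f * dilate (m ^ 2) f)) N := by
  obtain ⟨w, hw, hwf, R, hR⟩ :=
    hM.exists_map_dilate_mul_dilate_le_sum hf (show 0 < M f ^ 2 / 4 by positivity)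
  obtain ⟨g, C, q, hg, hpair⟩ :=
    hM.exists_isLinearFiniteToOne_le_map_dilate_mul_dilate hw (hwf.symm ▸ hpos)
  rw [hwf] at hpair
  refine exists_eventually_le_logAverage_of_le_sum (c := M f ^ 2 / 4) (R := R)
    (fun m n => hM.map_nonneg _ fun x => mul_nonneg (hf.1 _) (hf.1 _))
    hg (by positivity) fun t k ht hk => ?_
  obtain ⟨d, hd, hle⟩ := hpair t ht
  linarith [hR d (g t) k hd (hg.pos t ht) hk]

/-- **Theorem 1.9.** If `Λ` has positive upper multiplicative density with respect to a
multiplicative Følner sequence `Φ`, then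
`liminf_{N→∞} (1/(log N)²) ∑_{m,n ≤ N} (1/(mn)) d̄_Φ((n² + n)⁻¹Λ ∩ (m²)⁻¹Λ) > 0`. -/
theorem logarithmic_average_density_positive
    (Λ : Set ℕ) (hΛpos : ∀ n ∈ Λ, 0 < n)
    (Φ : ℕ → Finset ℕ) (hΦ : IsMulFolner Φ) (hdens : 0 < upMulDens Φ Λ) :
    0 < liminf (fun N : ℕ =>
      (1 / (Real.log N) ^ 2) * ∑ m ∈ Finset.Icc 1 N, ∑ n ∈ Finset.Icc 1 N,
        (1 / ((m : ℝ) * (n : ℝ))) *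
          upMulDens Φ ({x : ℕ | (n ^ 2 + n) * x ∈ Λ} ∩ {x : ℕ | m ^ 2 * x ∈ Λ})) atTop := by
  let D : ℕ → ℕ → ℝ := fun m n =>
    upMulDens Φ ({x : ℕ | (n ^ 2 + n) * x ∈ Λ} ∩ {x : ℕ | m ^ 2 * x ∈ Λ})
  change 0 < liminf (logAverage D) atTop
  obtain ⟨M, hM, hMΛ, hMD⟩ := hΦ.exists_isInvariantMean_eq_upMulDens Λ
  obtain ⟨κ, hκ, hlower⟩ :=
    hM.exists_eventually_le_logAverage (setIndicator_mem_Icc Λ) (hMΛ.symm ▸ hdens)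
  have hcobdd : IsCoboundedUnder (· ≥ ·) atTop (logAverage D) :=
    IsBoundedUnder.isCoboundedUnder_ge
      ⟨4, eventually_map.2 (eventually_logAverage_le fun _ _ => hΦ.upMulDens_le_one _)⟩
  refine hκ.trans_le (le_liminf_of_le hcobdd (hlower.mono fun N hN => hN.trans ?_))
  refine logAverage_mono (fun m n => ?_) N
  rw [dilate_setIndicator, dilate_setIndicator, setIndicator_mul_setIndicator]
  exact hMD _
end
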